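/- arXiv:1609.04195 — 3 statements merged into one kernel-verified Lean document; each statement's English description precedes it below -/
import Mathlib

section
/- Let A be an n×n complex Hermitian matrix and let b ∈ ℝ with b strictly greater than the largest eigenvalue of A (so bI − A is positive definite). Then every real root x of the r = 2 characteristic polynomial χ₂[A] satisfies x ≤ b − min_{1 ≤ i ≤ n} 1/(4·((bI − A)^{-1})_{ii}). -/
open Polynomial Matrix

/-- The number of cycles of a permutation, counting fixed points as cycles. -/
def cycleCount {ι : Type*} [Fintype ι] [DecidableEq ι] (σ : Equiv.Perm ι) : ℕ :=
  σ.cycleType.card + (Fintype.card ι - σ.support.card)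

/-- The `r`-determinant `det_r(M) = Σ_σ sgn(σ) r^{c(σ)} Π_i M_{i σ(i)}`. -/
noncomputable def detr {ι : Type*} [Fintype ι] [DecidableEq ι] {R : Type*} [CommRing R]
    (r : ℕ) (M : Matrix ι ι R) : R :=
  ∑ σ : Equiv.Perm ι, ((Equiv.Perm.sign σ : ℤ) : R) * (r : R) ^ cycleCount σ * ∏ i, M i (σ i)

/-- The `r`-characteristic polynomial `χ_r[A](x) = det_r(xI - A)`. -/
noncomputable def chir {n : ℕ} (r : ℕ) (A : Matrix (Fin n) (Fin n) ℂ) : Polynomial ℂ :=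
  detr r (Matrix.charmatrix A)

/-!
Colouring the cycles of a permutation with two colours gives `det₂ M = ∑ S, M[S] * M[Sᶜ]`, a sum of
products of complementary principal minors. For `M = diag(X₁, …, Xₙ) + B` this is the result of
applying `∂₁ ⋯ ∂ₙ` to `det M ^ 2`, since each `∂ᵢ` deletes row and column `i` from one of the two
factors. When `B = bI - A` is positive definite, `det M ^ 2` is real stable, has degree at most two
in each variable and is positive on the nonnegative orthant, and its barrier function
`∂ᵢ log (det M ^ 2)` takes the value `2 (B⁻¹)ᵢᵢ` at the origin.

The barrier argument of Marcus, Spielman and Srivastava now applies: if `p` is real stable of degree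
at most two in each variable and positive on an orthant whose apex has `i`-th barrier at most
`1 / (2δ)`, then `∂ᵢ p` is positive even after the apex is moved down by `δ` in direction `i`, and
no barrier increases in the process. Starting from the origin, each direction `i` can therefore be
lowered once by `1 / (4 (B⁻¹)ᵢᵢ)`.
-/

section PartialDerivatives

variable {ι R : Type*} [CommSemiring R]

theorem degreeOf_pderiv_le (i j : ι) (p : MvPolynomial ι R) :
    (MvPolynomial.pderiv j p).degreeOf i ≤ p.degreeOf i := by
  classical
  rw [MvPolynomial.degreeOf_le_iff]
  intro m hm
  have hp : m + Finsupp.single j 1 ∈ p.support := by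
    rw [MvPolynomial.mem_support_iff, MvPolynomial.coeff_pderiv] at hm
    exact MvPolynomial.mem_support_iff.mpr (left_ne_zero_of_mul hm)
  calc m i ≤ (m + Finsupp.single j 1 : ι →₀ ℕ) i := by simp
    _ ≤ p.degreeOf i := MvPolynomial.monomial_le_degreeOf i hp

theorem pderiv_comm (i j : ι) (p : MvPolynomial ι R) :
    MvPolynomial.pderiv i (MvPolynomial.pderiv j p)
      = MvPolynomial.pderiv j (MvPolynomial.pderiv i p) := by
  classical
  ext m
  simp only [MvPolynomial.coeff_pderiv, Finsupp.add_apply, Finsupp.single_apply]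
  by_cases h : i = j
  · subst h; rfl
  · simp only [h, Ne.symm h, if_false, add_zero, add_right_comm m]
    ring

end PartialDerivatives

section LineRestriction

variable {ι R A : Type*} [CommRing R] [CommRing A] [Algebra R A]

/-- The restriction of a multivariate polynomial to the line `t ↦ z + t • w`, as a univariate
polynomial in `t`. The line may live in an algebra `A` over the coefficient ring. -/
noncomputable def lineRestrict (z w : ι → A) : MvPolynomial ι R →ₐ[R] A[X] :=
  MvPolynomial.aeval fun k => C (z k) + C (w k) * X

theorem lineRestrict_X (z w : ι → A) (k : ι) :
    lineRestrict z w (MvPolynomial.X k : MvPolynomial ι R) = C (z k) + C (w k) * X :=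
  MvPolynomial.aeval_X _ k

theorem aeval_lineRestrict {B : Type*} [CommRing B] [Algebra R B] [Algebra A B]
    [IsScalarTower R A B] (z w : ι → A) (t : B) (p : MvPolynomial ι R) :
    aeval t (lineRestrict z w p)
      = MvPolynomial.aeval (fun k => algebraMap A B (z k) + t * algebraMap A B (w k)) p := by
  induction p using MvPolynomial.induction_on with
  | C a => simp [Polynomial.algebraMap_apply, ← IsScalarTower.algebraMap_apply]
  | add p q hp hq => simp [hp, hq]
  | mul_X p k hp => simp [hp, lineRestrict_X, mul_comm t]

theorem eval_lineRestrict (z w : ι → A) (t : A) (p : MvPolynomial ι R) :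
    (lineRestrict z w p).eval t = MvPolynomial.aeval (z + t • w) p := by
  rw [← coe_aeval_eq_eval, aeval_lineRestrict]
  rfl

theorem derivative_lineRestrict_single [DecidableEq ι] (z : ι → A) (i : ι)
    (p : MvPolynomial ι R) :
    derivative (lineRestrict z (Pi.single i 1) p)
      = lineRestrict z (Pi.single i 1) (MvPolynomial.pderiv i p) := by
  induction p using MvPolynomial.induction_on with
  | C a => simp
  | add p q hp hq => simp [hp, hq]
  | mul_X p k hp =>
    rcases eq_or_ne k i with rfl | h
    · simp only [map_mul, map_add, lineRestrict_X, Pi.single_eq_same, derivative_mul, hp,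
        Derivation.leibniz, MvPolynomial.pderiv_X_self, derivative_C, derivative_X, derivative_one,
        map_one, smul_eq_mul]
      ring
    · simp only [map_mul, map_add, lineRestrict_X, Pi.single_eq_of_ne h, derivative_mul, hp,
        Derivation.leibniz, MvPolynomial.pderiv_X_of_ne h, derivative_C, map_zero, smul_eq_mul]
      ring

theorem natDegree_lineRestrict_single_le [DecidableEq ι] (z : ι → A) (i : ι)
    (p : MvPolynomial ι R) :
    (lineRestrict z (Pi.single i 1) p).natDegree ≤ p.degreeOf i := by
  rw [lineRestrict, MvPolynomial.aeval_def, MvPolynomial.eval₂_eq]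
  refine natDegree_sum_le_of_forall_le _ _ fun m hm => ?_
  have hfactor (k : ι) : (C (z k) + C ((Pi.single i 1 : ι → A) k) * X).natDegree
      ≤ if k = i then 1 else 0 := by
    rcases eq_or_ne k i with rfl | h
    · rw [if_pos rfl]; compute_degree
    · simp [h]
  calc _ ≤ 0 + ∑ k ∈ m.support, m k * (if k = i then 1 else 0) := by
        refine natDegree_mul_le.trans (add_le_add (by simp [Polynomial.algebraMap_apply]) ?_)
        exact (natDegree_prod_le _ _).trans (Finset.sum_le_sum fun k _ =>
          natDegree_pow_le.trans (Nat.mul_le_mul_left _ (hfactor k)))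
    _ ≤ m i := by
        simp only [zero_add, mul_ite, mul_one, mul_zero, Finset.sum_ite_eq']
        split_ifs <;> simp
    _ ≤ p.degreeOf i := MvPolynomial.monomial_le_degreeOf i hm

end LineRestriction

section RealStability

variable {ι : Type*}

/-- A real multivariate polynomial is real stable if it has no zero all of whose coordinates lie in
the open upper half-plane. -/
def IsRealStable (p : MvPolynomial ι ℝ) : Prop :=
  ∀ z : ι → ℂ, (∀ k, 0 < (z k).im) → MvPolynomial.aeval z p ≠ 0

theorem exists_aeval_ne_zero {R A : Type*} [CommRing R] [CommRing A] [IsDomain A] [Algebra R A]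
    [FaithfulSMul R A] {p : MvPolynomial ι R} (hp : p ≠ 0) {s : ι → Set A}
    (hs : ∀ i, (s i).Infinite) : ∃ x ∈ Set.pi .univ s, MvPolynomial.aeval x p ≠ 0 := by
  by_contra! h
  have hmap : MvPolynomial.map (algebraMap R A) p = 0 :=
    MvPolynomial.funext_set s hs fun x hx => by
      simpa [MvPolynomial.eval_map, ← MvPolynomial.aeval_def] using h x hx
  exact hp (MvPolynomial.map_injective _ (FaithfulSMul.algebraMap_injective R A) (by simpa))

theorem aeval_ofReal (x : ι → ℝ) (p : MvPolynomial ι ℝ) :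
    MvPolynomial.aeval (fun k => (x k : ℂ)) p = (MvPolynomial.aeval x p : ℝ) :=
  MvPolynomial.aeval_algebraMap_apply ℂ x p

theorem continuous_aeval {R A : Type*} [CommSemiring R] [CommSemiring A] [Algebra R A]
    [TopologicalSpace A] [IsTopologicalSemiring A] (p : MvPolynomial ι R) :
    Continuous fun z : ι → A => MvPolynomial.aeval z p := by
  simpa only [MvPolynomial.aeval_def, ← MvPolynomial.eval_map] using
    MvPolynomial.continuous_eval (p.map (algebraMap R A))

theorem analyticOnNhd_aeval [Fintype ι] (p : MvPolynomial ι ℝ) :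
    AnalyticOnNhd ℂ (fun z : ι → ℂ => MvPolynomial.aeval z p) Set.univ :=
  .aeval_mvPolynomial
    (fun k z _ => (ContinuousLinearMap.proj (R := ℂ) (φ := fun _ : ι => ℂ) k).analyticAt z) p

theorem im_derivative_div_nonpos {f : ℂ[X]} (hf : ∀ t : ℂ, 0 ≤ t.im → f.eval t ≠ 0) :
    (f.derivative.eval 0 / f.eval 0).im ≤ 0 := by
  rw [(IsAlgClosed.splits f).eval_derivative_div_eval_of_ne_zero (hf 0 le_rfl),
    ← Complex.coe_imAddGroupHom, map_multiset_sum, Multiset.map_map]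
  refine Multiset.sum_induction (· ≤ 0) _ (fun _ _ => add_nonpos) le_rfl fun y hy => ?_
  obtain ⟨w, hw, rfl⟩ := Multiset.mem_map.mp hy
  have hw_im : w.im ≤ 0 := by
    by_contra! h
    exact hf w h.le (isRoot_of_mem_roots hw)
  simpa [Complex.inv_im, neg_div] using
    div_nonpos_of_nonpos_of_nonneg hw_im (Complex.normSq_nonneg _)

theorem derivative_mul_le_of_im_mul_star_nonpos {f g : ℝ[X]}
    (h : ∀ t : ℂ, 0 ≤ t.im → (aeval t g * star (aeval t f)).im ≤ 0) (x : ℝ) :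
    g.derivative.eval x * f.eval x ≤ g.eval x * f.derivative.eval x := by
  have hline : HasDerivAt (fun v : ℝ => (x : ℂ) + v * Complex.I) Complex.I 0 := by
    simpa using
      ((Complex.ofRealCLM.hasDerivAt (x := (0 : ℝ))).mul_const Complex.I).const_add (x : ℂ)
  have hreal (q : ℝ[X]) : aeval (x : ℂ) q = (q.eval x : ℝ) :=
    aeval_algebraMap_apply_eq_algebraMap_eval x q
  have hderiv (q : ℝ[X]) : HasDerivAt (fun v : ℝ => aeval ((x : ℂ) + v * Complex.I) q)
      ((q.derivative.eval x : ℝ) * Complex.I) 0 := by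
    have hq := q.hasDerivAt_aeval ((x : ℂ) + (0 : ℝ) * Complex.I)
    simpa [Function.comp_def, hreal] using hq.comp (0 : ℝ) hline
  have hslope := (Complex.imCLM.hasFDerivAt.comp_hasDerivAt (0 : ℝ)
    ((hderiv g).mul (hderiv f).star)).tendsto_slope_zero_right
  refine sub_nonpos.mp (le_of_tendsto (by simpa [hreal, ← sub_eq_add_neg] using hslope) ?_)
  filter_upwards [self_mem_nhdsWithin] with v (hv : 0 < v)
  have hnonpos := h (x + v * Complex.I) (by simpa using hv.le)
  refine mul_nonpos_of_nonneg_of_nonpos (inv_nonneg.mpr hv.le) ?_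
  simpa [hreal] using hnonpos

namespace IsRealStable

variable {p : MvPolynomial ι ℝ}

theorem im_pderiv_div_nonpos (hp : IsRealStable p) (j : ι) {z : ι → ℂ} (hz : ∀ k, 0 < (z k).im) :
    (MvPolynomial.aeval z (MvPolynomial.pderiv j p) / MvPolynomial.aeval z p).im ≤ 0 := by
  classical
  have h := im_derivative_div_nonpos (f := lineRestrict z (Pi.single j 1) p) fun t ht => by
    rw [eval_lineRestrict]
    refine hp _ fun k => ?_
    rcases eq_or_ne k j with rfl | hk
    · simpa using add_pos_of_pos_of_nonneg (hz k) ht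
    · simpa [hk] using hz k
  simpa [derivative_lineRestrict_single, eval_lineRestrict] using h

theorem pderiv [Finite ι] (hp : IsRealStable p) {i : ι} (h : MvPolynomial.pderiv i p ≠ 0) :
    IsRealStable (MvPolynomial.pderiv i p) := by
  cases nonempty_fintype ι
  set U : Set (ι → ℂ) := Set.pi .univ fun _ => {w | 0 < w.im} with hU
  set g : (ι → ℂ) → ℂ := fun z =>
    MvPolynomial.aeval z (MvPolynomial.pderiv i p) / MvPolynomial.aeval z p with hg
  have hmem {z : ι → ℂ} : z ∈ U ↔ ∀ k, 0 < (z k).im := by simp [hU]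
  have hopen : IsOpen U := isOpen_set_pi Set.finite_univ fun _ _ =>
    isOpen_lt continuous_const Complex.continuous_im
  have hconvex : Convex ℝ U := convex_pi fun _ _ => convex_halfSpace_im_gt 0
  have hg_ana : AnalyticOnNhd ℂ g U :=
    ((analyticOnNhd_aeval _).mono U.subset_univ).div ((analyticOnNhd_aeval p).mono U.subset_univ)
      fun z hz => hp z (hmem.mp hz)
  suffices ∀ z ∈ U, g z ≠ 0 from fun z hz h0 => this z (hmem.mpr hz) (by simp [hg, h0])
  rcases hg_ana.is_constant_or_isOpen hconvex.isPreconnected with ⟨w, hw⟩ | himage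
  · have hinf : {w : ℂ | 0 < w.im}.Infinite :=
      infinite_of_mem_nhds Complex.I <|
        (isOpen_lt continuous_const Complex.continuous_im).mem_nhds (by simp)
    obtain ⟨y, hy, hne⟩ := exists_aeval_ne_zero h fun _ : ι => hinf
    have hgy : g y ≠ 0 := div_ne_zero hne (hp y (hmem.mp hy))
    exact fun z hz => by rwa [hw z hz, ← hw y hy]
  · -- By the open mapping theorem the values of `g` lie in the interior of the lower half-plane.
    have hsub : g '' U ⊆ {w | w.im < 0} := by
      have : g '' U ⊆ interior {w | w.im ≤ 0} :=
        (himage U subset_rfl hopen).subset_interior_iff.mpr <|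
          Set.image_subset_iff.mpr fun z hz => hp.im_pderiv_div_nonpos i (hmem.mp hz)
      rwa [Complex.interior_setOfPred_im_le] at this
    exact fun z hz h0 => by simpa [h0] using hsub ⟨z, hz, rfl⟩

theorem im_pderiv_mul_star_nonpos (hp : IsRealStable p) (j : ι) {z : ι → ℂ}
    (hz : ∀ k, 0 ≤ (z k).im) :
    (MvPolynomial.aeval z (MvPolynomial.pderiv j p) * star (MvPolynomial.aeval z p)).im ≤ 0 := by
  set w : ℝ → ι → ℂ := fun ε k => z k + ε * Complex.I with hw
  have hcont (q : MvPolynomial ι ℝ) : Continuous fun ε => MvPolynomial.aeval (w ε) q :=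
    (continuous_aeval q).comp (by fun_prop)
  have hlim : Continuous fun ε => (MvPolynomial.aeval (w ε) (MvPolynomial.pderiv j p)
      * star (MvPolynomial.aeval (w ε) p)).im :=
    Complex.continuous_im.comp ((hcont _).mul (hcont p).star)
  refine le_of_tendsto ((hlim.tendsto' 0 _ (by simp [hw])).mono_left
    (nhdsWithin_le_nhds (s := Set.Ioi 0))) ?_
  filter_upwards [self_mem_nhdsWithin] with ε (hε : 0 < ε)
  have hwε : ∀ k, 0 < (w ε k).im := fun k => by
    simpa [hw] using add_pos_of_nonneg_of_pos (hz k) hε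
  rw [← div_mul_cancel₀ (MvPolynomial.aeval (w ε) (MvPolynomial.pderiv j p)) (hp _ hwε), mul_assoc,
    Complex.star_def, Complex.mul_conj, Complex.im_mul_ofReal]
  exact mul_nonpos_of_nonpos_of_nonneg (hp.im_pderiv_div_nonpos j hwε) (Complex.normSq_nonneg _)

theorem derivative_lineRestrict_mul_le (hp : IsRealStable p) (j : ι) (x : ι → ℝ) {w : ι → ℝ}
    (hw : 0 ≤ w) (t : ℝ) :
    (derivative (lineRestrict x w (MvPolynomial.pderiv j p))).eval t * (lineRestrict x w p).eval t
      ≤ (lineRestrict x w (MvPolynomial.pderiv j p)).eval t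
        * (derivative (lineRestrict x w p)).eval t := by
  refine derivative_mul_le_of_im_mul_star_nonpos (fun s hs => ?_) t
  simp only [aeval_lineRestrict]
  exact hp.im_pderiv_mul_star_nonpos j fun k => by simpa using mul_nonneg hs (hw k)

end IsRealStable

end RealStability

section Quadratics

theorem leadingCoeff_nonneg_of_pos {f : ℝ[X]} (hpos : ∀ u, 0 ≤ u → 0 < f.eval u) :
    0 ≤ f.leadingCoeff := by
  rcases le_or_gt f.degree 0 with hdeg | hdeg
  · have h := hpos 0 le_rfl
    rw [eq_C_of_degree_le_zero hdeg] at h ⊢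
    simpa using h.le
  · by_contra! hlead
    have h := f.tendsto_atBot_of_leadingCoeff_nonpos hdeg hlead.le
    obtain ⟨u, hu, hfu⟩ := ((Filter.eventually_ge_atTop 0).and (h.eventually_lt_atBot 0)).exists
    exact (hpos u hu).not_gt hfu

theorem coeff_two_nonneg_of_pos {f : ℝ[X]} (hf : f.natDegree ≤ 2)
    (hpos : ∀ u, 0 ≤ u → 0 < f.eval u) : 0 ≤ f.coeff 2 := by
  rcases hf.lt_or_eq with h | h
  · exact (coeff_eq_zero_of_natDegree_lt h).ge
  · simpa [leadingCoeff, h] using leadingCoeff_nonneg_of_pos hpos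

theorem eval_eq_of_natDegree_le_two {f : ℝ[X]} (hf : f.natDegree ≤ 2) (u : ℝ) :
    f.eval u = f.coeff 0 + f.coeff 1 * u + f.coeff 2 * u ^ 2 := by
  rw [eval_eq_sum_range' (Nat.lt_succ_of_le hf)]
  simp [Finset.sum_range_succ]

theorem eval_derivative_eq_of_natDegree_le_two {f : ℝ[X]} (hf : f.natDegree ≤ 2) (u : ℝ) :
    f.derivative.eval u = f.coeff 1 + 2 * f.coeff 2 * u := by
  rw [eval_eq_sum_range' (n := 2) ((natDegree_derivative_le f).trans_lt (by lia))]
  simp [Finset.sum_range_succ, coeff_derivative, one_add_one_eq_two, mul_comm (f.coeff 2)]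

theorem eval_derivative_derivative_eq_of_natDegree_le_two {f : ℝ[X]} (hf : f.natDegree ≤ 2)
    (u : ℝ) : f.derivative.derivative.eval u = 2 * f.coeff 2 := by
  have hconst : f.derivative.derivative.natDegree < 1 := by
    grind [natDegree_derivative_le f, natDegree_derivative_le f.derivative]
  rw [eval_eq_sum_range' hconst]
  simp [coeff_derivative, one_add_one_eq_two, mul_comm (f.coeff 2)]

theorem eval_derivative_zero_nonneg_of_log_concave {f : ℝ[X]} (hf : f.natDegree ≤ 2)
    (hpos : ∀ u, 0 ≤ u → 0 < f.eval u)
    (hlog : ∀ u, f.derivative.derivative.eval u * f.eval u ≤ f.derivative.eval u ^ 2) :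
    0 ≤ f.derivative.eval 0 := by
  have hcoeff := coeff_two_nonneg_of_pos hf hpos
  by_contra! hneg
  simp only [eval_derivative_eq_of_natDegree_le_two hf, mul_zero, add_zero] at hneg
  rcases hcoeff.eq_or_lt with hcoeff | hcoeff
  · have h := hpos (-f.coeff 0 / f.coeff 1)
      (div_nonneg_of_nonpos (by simpa [coeff_zero_eq_eval_zero] using (hpos 0 le_rfl).le) hneg.le)
    simp [eval_eq_of_natDegree_le_two hf, ← hcoeff, mul_div_cancel₀ _ hneg.ne] at h
  · -- At the vertex the log-concavity hypothesis forces `f ≤ 0`.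
    set u := -f.coeff 1 / (2 * f.coeff 2)
    have hvertex : f.coeff 1 + 2 * f.coeff 2 * u = 0 := by
      rw [mul_div_cancel₀ _ (by positivity), add_neg_cancel]
    have hu := hpos u (div_nonneg (by linarith) (by linarith))
    have h := hlog u
    rw [eval_derivative_derivative_eq_of_natDegree_le_two hf,
      eval_derivative_eq_of_natDegree_le_two hf, hvertex] at h
    nlinarith

theorem eval_derivative_neg_pos_of_log_concave {f : ℝ[X]} (hf : f.natDegree ≤ 2)
    (hlog : ∀ u, f.derivative.derivative.eval u * f.eval u ≤ f.derivative.eval u ^ 2)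
    (hderiv : 0 < f.derivative.eval 0) {δ : ℝ} (hδ : 0 ≤ δ)
    (hbarrier : 2 * δ * f.derivative.eval 0 ≤ f.eval 0) : 0 < f.derivative.eval (-δ) := by
  have h := hlog 0
  simp only [eval_derivative_derivative_eq_of_natDegree_le_two hf,
    eval_derivative_eq_of_natDegree_le_two hf, mul_zero, add_zero] at *
  rcases le_total (f.coeff 2) 0 with hcoeff | hcoeff
  · nlinarith
  · have := mul_le_mul_of_nonneg_right hbarrier hcoeff
    nlinarith

theorem derivative_mul_le_of_wronskian_nonpos {f g : ℝ[X]} (hf : f.natDegree ≤ 2)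
    (hg : g.natDegree ≤ 2) (hpos : ∀ u, 0 ≤ u → 0 < f.eval u)
    (hwronskian : ∀ u, g.derivative.eval u * f.eval u ≤ g.eval u * f.derivative.eval u)
    (hderiv : 0 < f.derivative.eval 0) {δ : ℝ} (hδ : 0 ≤ δ)
    (hbarrier : 2 * δ * f.derivative.eval 0 ≤ f.eval 0) :
    g.derivative.eval (-δ) * f.eval 0 ≤ g.eval 0 * f.derivative.eval (-δ) := by
  have hq₀ := hpos 0 le_rfl
  have hq₂ := coeff_two_nonneg_of_pos hf hpos
  simp only [eval_eq_of_natDegree_le_two hf, eval_eq_of_natDegree_le_two hg,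
    eval_derivative_eq_of_natDegree_le_two hf, eval_derivative_eq_of_natDegree_le_two hg, mul_zero,
    add_zero, ne_eq, OfNat.ofNat_ne_zero, not_false_eq_true, zero_pow] at *
  generalize f.coeff 0 = q₀, f.coeff 1 = q₁, f.coeff 2 = q₂, g.coeff 0 = n₀, g.coeff 1 = n₁,
    g.coeff 2 = n₂ at *
  -- The Wronskian is the quadratic `d u² + 2 c u + a`. Its coefficients are the `2 × 2` minors of
  -- the coefficients of `f` and `g`, hence linked by a Plücker relation.
  set a := n₁ * q₀ - n₀ * q₁ with ha
  set c := n₂ * q₀ - n₀ * q₂ with hc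
  set d := n₂ * q₁ - n₁ * q₂ with hd
  have hquad (u : ℝ) : d * (u * u) + 2 * c * u + a ≤ 0 := by linarith [hwronskian u]
  have ha_nonpos : a ≤ 0 := by simpa using hquad 0
  have hdiscrim : c ^ 2 ≤ a * d := by
    have := discrim_le_zero_of_nonpos hquad
    rw [discrim] at this
    linarith
  have hpluecker : q₀ * d = q₁ * c - q₂ * a := by rw [ha, hc, hd]; ring
  suffices a ≤ 2 * δ * c by linarith
  rcases le_or_gt 0 c with hc_sign | hc_sign
  · exact ha_nonpos.trans (by positivity)
  · have h : a * q₁ ≤ c * q₀ := by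
      refine (mul_le_mul_left_of_neg hc_sign).mp ?_
      nlinarith [hpluecker, mul_nonneg hq₂ (sq_nonneg a)]
    nlinarith

end Quadratics

section Barrier

variable {ι : Type*} {p : MvPolynomial ι ℝ} {a : ι → ℝ}

/-- The barrier function `Φ_p^j = ∂ⱼ log p` of Marcus, Spielman and Srivastava. -/
noncomputable def barrier (p : MvPolynomial ι ℝ) (j : ι) (x : ι → ℝ) : ℝ :=
  MvPolynomial.aeval x (MvPolynomial.pderiv j p) / MvPolynomial.aeval x p

/-- The point `a` lies above the roots of `p`: `p` is positive on the orthant with apex `a`. -/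
def IsAboveRoots (a : ι → ℝ) (p : MvPolynomial ι ℝ) : Prop :=
  ∀ x, a ≤ x → 0 < MvPolynomial.aeval x p

theorem IsAboveRoots.mono {b : ι → ℝ} (ha : IsAboveRoots a p) (hab : a ≤ b) : IsAboveRoots b p :=
  fun x hx => ha x (hab.trans hx)

theorem IsAboveRoots.eval_lineRestrict_pos (ha : IsAboveRoots a p) {w : ι → ℝ} (hw : 0 ≤ w) {u : ℝ}
    (hu : 0 ≤ u) : 0 < (lineRestrict a w p).eval u := by
  rw [eval_lineRestrict]
  exact ha _ (le_add_of_nonneg_right (smul_nonneg hu hw))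

variable {i : ι} {δ : ℝ}

theorem eval_neg_lineRestrict_single [DecidableEq ι] (x : ι → ℝ) (p : MvPolynomial ι ℝ) :
    (lineRestrict x (Pi.single i 1) p).eval (-δ) = MvPolynomial.aeval (x - Pi.single i δ) p := by
  rw [eval_lineRestrict, ← Pi.single_smul, smul_eq_mul, mul_one, Pi.single_neg, sub_eq_add_neg]

theorem IsAboveRoots.mul_aeval_pderiv_le (ha : IsAboveRoots a p)
    (hbarrier : 2 * δ * barrier p i a ≤ 1) :
    2 * δ * MvPolynomial.aeval a (MvPolynomial.pderiv i p) ≤ MvPolynomial.aeval a p := by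
  rwa [barrier, ← mul_div_assoc, div_le_one (ha a le_rfl)] at hbarrier

theorem IsRealStable.barrier_antitoneOn (hp : IsRealStable p) (ha : IsAboveRoots a p)
    (j : ι) : AntitoneOn (barrier p j) (Set.Ici a) := by
  intro x (hx : a ≤ x) y _ hxy
  set f := lineRestrict x (y - x) p with hf
  set g := lineRestrict x (y - x) (MvPolynomial.pderiv j p) with hg
  have hw : 0 ≤ y - x := sub_nonneg.mpr hxy
  have hfpos : ∀ t ∈ Set.Icc (0 : ℝ) 1, 0 < f.eval t := fun t ht =>
    (ha.mono hx).eval_lineRestrict_pos hw ht.1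
  have hanti : AntitoneOn (fun t => g.eval t / f.eval t) (Set.Icc 0 1) := by
    refine antitoneOn_of_hasDerivWithinAt_nonpos (convex_Icc 0 1)
      (g.continuousOn.div f.continuousOn fun t ht => (hfpos t ht).ne')
      (fun t ht => ((g.hasDerivAt t).div (f.hasDerivAt t)
        (hfpos t (interior_subset ht)).ne').hasDerivWithinAt) fun t _ => ?_
    exact div_nonpos_of_nonpos_of_nonneg
      (sub_nonpos.mpr (hp.derivative_lineRestrict_mul_le j x hw t)) (sq_nonneg _)
  have h := hanti (Set.left_mem_Icc.mpr zero_le_one) (Set.right_mem_Icc.mpr zero_le_one) zero_le_one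
  simpa [hf, hg, eval_lineRestrict, barrier] using h

theorem IsRealStable.aeval_pderiv_nonneg (hp : IsRealStable p) (hdeg : p.degreeOf i ≤ 2)
    (ha : IsAboveRoots a p) : 0 ≤ MvPolynomial.aeval a (MvPolynomial.pderiv i p) := by
  classical
  have hlog := hp.derivative_lineRestrict_mul_le i a (w := Pi.single i 1)
    (Pi.single_nonneg.mpr zero_le_one)
  have h := eval_derivative_zero_nonneg_of_log_concave (f := lineRestrict a (Pi.single i 1) p)
    ((natDegree_lineRestrict_single_le a i p).trans hdeg)
    (fun u hu => ha.eval_lineRestrict_pos (Pi.single_nonneg.mpr zero_le_one) hu)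
    (by simpa only [derivative_lineRestrict_single, sq] using hlog)
  simpa [derivative_lineRestrict_single, eval_lineRestrict] using h

theorem IsRealStable.isAboveRoots_pderiv (hp : IsRealStable p) (hdeg : p.degreeOf i ≤ 2)
    (ha : IsAboveRoots a p) (h : MvPolynomial.pderiv i p ≠ 0) :
    IsAboveRoots a (MvPolynomial.pderiv i p) := by
  classical
  intro x hx
  refine (hp.aeval_pderiv_nonneg hdeg (ha.mono hx)).lt_of_ne' fun hzero => ?_
  -- Being nonnegative and antitone, `barrier p i` would vanish on the orthant above `x`.
  obtain ⟨y, hy, hne⟩ := exists_aeval_ne_zero h fun k => Set.Ici_infinite (x k)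
  have hxy : x ≤ y := fun k => hy k (Set.mem_univ k)
  have hay := ha.mono (hx.trans hxy)
  have hle : barrier p i y ≤ 0 := by
    simpa [barrier, hzero] using hp.barrier_antitoneOn ha i hx (hx.trans hxy) hxy
  exact hle.not_gt (div_pos ((hp.aeval_pderiv_nonneg hdeg hay).lt_of_ne' hne) (hay y le_rfl))

theorem IsRealStable.isAboveRoots_sub_pderiv [DecidableEq ι] (hp : IsRealStable p)
    (hdeg : p.degreeOf i ≤ 2) (ha : IsAboveRoots a p) (h : MvPolynomial.pderiv i p ≠ 0) (hδ : 0 ≤ δ)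
    (hbarrier : 2 * δ * barrier p i a ≤ 1) :
    IsAboveRoots (a - Pi.single i δ) (MvPolynomial.pderiv i p) := by
  intro y hy
  obtain ⟨x, rfl⟩ : ∃ x, y = x - Pi.single i δ := ⟨y + Pi.single i δ, by simp⟩
  have hax : a ≤ x := by simpa using hy
  have hbarrier_x : 2 * δ * barrier p i x ≤ 1 :=
    (mul_le_mul_of_nonneg_left (hp.barrier_antitoneOn ha i Set.self_mem_Ici hax hax)
      (by positivity)).trans hbarrier
  have hlog := hp.derivative_lineRestrict_mul_le i x (w := Pi.single i 1)
    (Pi.single_nonneg.mpr zero_le_one)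
  rw [← eval_neg_lineRestrict_single, ← derivative_lineRestrict_single]
  refine eval_derivative_neg_pos_of_log_concave
    ((natDegree_lineRestrict_single_le x i p).trans hdeg)
    (by simpa only [derivative_lineRestrict_single, sq] using hlog) ?_ hδ ?_
  · simpa [derivative_lineRestrict_single, eval_lineRestrict] using
      hp.isAboveRoots_pderiv hdeg ha h x hax
  · simpa [derivative_lineRestrict_single, eval_lineRestrict] using
      (ha.mono hax).mul_aeval_pderiv_le hbarrier_x

theorem IsRealStable.barrier_pderiv_sub_le [DecidableEq ι] (hp : IsRealStable p)
    (hdeg : p.degreeOf i ≤ 2) (ha : IsAboveRoots a p) (h : MvPolynomial.pderiv i p ≠ 0) (hδ : 0 ≤ δ)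
    (hbarrier : 2 * δ * barrier p i a ≤ 1) (j : ι) :
    barrier (MvPolynomial.pderiv i p) j (a - Pi.single i δ) ≤ barrier p j a := by
  have hpos := hp.isAboveRoots_sub_pderiv hdeg ha h hδ hbarrier (a - Pi.single i δ) le_rfl
  rw [barrier, barrier, div_le_div_iff₀ hpos (ha a le_rfl), pderiv_comm]
  have hw : (0 : ι → ℝ) ≤ Pi.single i 1 := Pi.single_nonneg.mpr zero_le_one
  have hle := derivative_mul_le_of_wronskian_nonpos
    ((natDegree_lineRestrict_single_le a i p).trans hdeg)
    ((natDegree_lineRestrict_single_le a i (MvPolynomial.pderiv j p)).trans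
      ((degreeOf_pderiv_le i j p).trans hdeg))
    (fun u hu => ha.eval_lineRestrict_pos hw hu)
    (hp.derivative_lineRestrict_mul_le j a hw)
    (by simpa [derivative_lineRestrict_single, eval_lineRestrict] using
      hp.isAboveRoots_pderiv hdeg ha h a le_rfl) hδ
    (by simpa [derivative_lineRestrict_single, eval_lineRestrict] using
      ha.mul_aeval_pderiv_le hbarrier)
  simp only [derivative_lineRestrict_single, eval_neg_lineRestrict_single] at hle
  simpa [eval_lineRestrict] using hle

theorem IsRealStable.isAboveRoots_of_pderiv_chain [Fintype ι] [DecidableEq ι]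
    {q : Finset ι → MvPolynomial ι ℝ} {δ : ι → ℝ}
    (hstable : IsRealStable (q ∅)) (hdeg : ∀ i, (q ∅).degreeOf i ≤ 2) (ha : IsAboveRoots a (q ∅))
    (hne : ∀ T, q T ≠ 0) (hq : ∀ i, ∀ T, i ∉ T → q (insert i T) = MvPolynomial.pderiv i (q T))
    (hδ : 0 ≤ δ) (hbarrier : ∀ i, 2 * δ i * barrier (q ∅) i a ≤ 1) :
    IsAboveRoots (a - δ) (q Finset.univ) := by
  suffices ∀ T : Finset ι, IsRealStable (q T) ∧ (∀ i, (q T).degreeOf i ≤ 2) ∧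
      IsAboveRoots (a - ∑ i ∈ T, Pi.single i (δ i)) (q T) ∧
      ∀ j, barrier (q T) j (a - ∑ i ∈ T, Pi.single i (δ i)) ≤ barrier (q ∅) j a by
    simpa [Finset.univ_sum_single] using (this Finset.univ).2.2.1
  intro T
  induction T using Finset.induction_on with
  | empty => simpa using ⟨hstable, hdeg, ha⟩
  | insert i T hi ih =>
    obtain ⟨hstableT, hdegT, haT, hbarrierT⟩ := ih
    have hpderiv : MvPolynomial.pderiv i (q T) ≠ 0 := hq i T hi ▸ hne _
    have hi_barrier : 2 * δ i * barrier (q T) i (a - ∑ k ∈ T, Pi.single k (δ k)) ≤ 1 :=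
      (mul_le_mul_of_nonneg_left (hbarrierT i) (mul_nonneg zero_le_two (hδ i))).trans (hbarrier i)
    rw [hq i T hi, Finset.sum_insert hi, add_comm, ← sub_sub]
    exact ⟨hstableT.pderiv hpderiv, fun j => (degreeOf_pderiv_le j i _).trans (hdegT j),
      hstableT.isAboveRoots_sub_pderiv (hdegT i) haT hpderiv (hδ i) hi_barrier,
      fun j => (hstableT.barrier_pderiv_sub_le (hdegT i) haT hpderiv (hδ i) hi_barrier j).trans
        (hbarrierT j)⟩

end Barrier

section Colorings

variable {ι : Type*} [Fintype ι] [DecidableEq ι]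

/-- A label of the cycle of `σ` through `x`: the point `x` itself if it is fixed, and the cyclic
factor of `σ` moving `x` otherwise. -/
def cycleLabel (σ : Equiv.Perm ι) (x : ι) : Equiv.Perm ι ⊕ ι :=
  if σ x = x then Sum.inr x else Sum.inl (σ.cycleOf x)

theorem cycleLabel_eq_iff_sameCycle (σ : Equiv.Perm ι) (x y : ι) :
    cycleLabel σ x = cycleLabel σ y ↔ σ.SameCycle x y := by
  unfold cycleLabel
  split_ifs with hx hy hy
  · exact Sum.inr_injective.eq_iff.trans
      ⟨fun h => h ▸ .refl σ x, fun h => h.eq_of_left hx⟩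
  · simpa using fun h => hy ((h.apply_eq_self_iff).mp hx)
  · simpa using fun h => hx ((h.apply_eq_self_iff).mpr hy)
  · rw [Sum.inl_injective.eq_iff, Equiv.Perm.sameCycle_iff_cycleOf_eq_of_mem_support
      (Equiv.Perm.mem_support.mpr hx) (Equiv.Perm.mem_support.mpr hy)]

theorem image_cycleLabel (σ : Equiv.Perm ι) :
    Finset.univ.image (cycleLabel σ) = σ.cycleFactorsFinset.disjSum σ.supportᶜ := by
  ext (c | x)
  · suffices (∃ x, cycleLabel σ x = Sum.inl c) ↔ c ∈ σ.cycleFactorsFinset by simpa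
    constructor
    · rintro ⟨x, hx⟩
      unfold cycleLabel at hx
      split_ifs at hx with hfix
      rw [← Sum.inl_injective hx, Equiv.Perm.cycleOf_mem_cycleFactorsFinset_iff]
      exact Equiv.Perm.mem_support.mpr hfix
    · intro hc
      obtain ⟨x, hx⟩ := (Equiv.Perm.mem_cycleFactorsFinset_iff.mp hc).1.nonempty_support
      have hxσ := Equiv.Perm.mem_support.mp (Equiv.Perm.mem_cycleFactorsFinset_support_le hc hx)
      exact ⟨x, by rw [cycleLabel, if_neg hxσ, Equiv.Perm.cycle_is_cycleOf hx hc]⟩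
  · simp [cycleLabel, ite_eq_iff]

theorem card_quotient_sameCycle (σ : Equiv.Perm ι) :
    Nat.card (Quotient (Equiv.Perm.SameCycle.setoid σ)) = cycleCount σ := by
  have hker : Equiv.Perm.SameCycle.setoid σ = Setoid.ker (cycleLabel σ) :=
    Setoid.ext fun x y => (cycleLabel_eq_iff_sameCycle σ x y).symm
  rw [hker, Nat.card_congr (Setoid.quotientKerEquivRange (cycleLabel σ)), ← Set.image_univ,
    ← Finset.coe_univ, ← Finset.coe_image, image_cycleLabel, Nat.card_eq_fintype_card]
  simp [Finset.card_disjSum, Finset.card_compl, cycleCount, Equiv.Perm.cycleType_def]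

theorem card_invariant_colorings (κ : Type*) [Fintype κ] [DecidableEq κ] (σ : Equiv.Perm ι) :
    Fintype.card {f : ι → κ // ∀ i, f (σ i) = f i} = Fintype.card κ ^ cycleCount σ := by
  have hconst {f : ι → κ} (hf : ∀ i, f (σ i) = f i) {x y : ι} (h : σ.SameCycle x y) :
      f x = f y := by
    obtain ⟨m, -, rfl⟩ := h.exists_pow_eq'
    have hiter := (show Function.Semiconj f σ id from hf).iterate_right m x
    rwa [Function.iterate_id, Equiv.Perm.iterate_eq_pow, id, eq_comm] at hiter
  let e : {f : ι → κ // ∀ i, f (σ i) = f i} ≃ (Quotient (Equiv.Perm.SameCycle.setoid σ) → κ) :=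
    { toFun f := Quotient.lift f.1 fun _ _ h => hconst f.2 h
      invFun g := ⟨fun i => g (Quotient.mk _ i), fun i =>
        congrArg g (Quotient.sound (Equiv.Perm.sameCycle_apply_left.mpr (.refl σ i)))⟩
      left_inv _ := rfl
      right_inv g := funext fun q => q.inductionOn fun _ => rfl }
  rw [← card_quotient_sameCycle, ← Nat.card_eq_fintype_card, Nat.card_congr e, Nat.card_fun,
    Nat.card_eq_fintype_card]

theorem detr_card_eq_sum_det {R : Type*} [CommRing R] (κ : Type*) [Fintype κ] [DecidableEq κ]
    (M : Matrix ι ι R) :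
    detr (Fintype.card κ) M
      = ∑ f : ι → κ, (Matrix.of fun i j => if f i = f j then M i j else 0).det := by
  have hprod (f : ι → κ) (σ : Equiv.Perm ι) :
      ∏ i, (if f (σ i) = f i then M i (σ i) else 0)
        = if ∀ i, f (σ i) = f i then ∏ i, M i (σ i) else 0 := by
    simp [Finset.prod_ite_zero]
  calc detr (Fintype.card κ) M
      = ∑ σ : Equiv.Perm ι, ∑ f : ι → κ, if ∀ i, f (σ i) = f i then
          ((Equiv.Perm.sign σ : ℤ) : R) * ∏ i, M i (σ i) else 0 := by
        refine Finset.sum_congr rfl fun σ _ => ?_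
        rw [← Finset.sum_filter, Finset.sum_const, ← Fintype.card_subtype,
          card_invariant_colorings, nsmul_eq_mul, Nat.cast_pow]
        ring
    _ = ∑ f : ι → κ, (Matrix.of fun i j => if f i = f j then M i j else 0).det := by
        rw [Finset.sum_comm]
        refine Finset.sum_congr rfl fun f _ => ?_
        rw [← Matrix.det_transpose, Matrix.det_apply']
        refine Finset.sum_congr rfl fun σ _ => ?_
        simp only [Matrix.transpose_apply, Matrix.of_apply, @eq_comm _ (f _) (f (σ _))]
        rw [hprod, mul_ite, mul_zero]

end Colorings

section PrincipalMinors

variable {ι R : Type*} [DecidableEq ι] [CommRing R]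

/-- The principal minor of `M` on the rows and columns in `S`. -/
def principalMinor (M : Matrix ι ι R) (S : Finset ι) : R :=
  (M.submatrix ((↑) : S → ι) (↑)).det

theorem principalMinor_congr {M N : Matrix ι ι R} {S : Finset ι}
    (h : ∀ i ∈ S, ∀ j ∈ S, M i j = N i j) : principalMinor M S = principalMinor N S :=
  congrArg Matrix.det (Matrix.ext fun i j => h i i.2 j j.2)

theorem principalMinor_one (S : Finset ι) : principalMinor (1 : Matrix ι ι R) S = 1 := by
  rw [principalMinor, Matrix.submatrix_one _ Subtype.coe_injective, Matrix.det_one]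

theorem map_principalMinor {R' : Type*} [CommRing R'] (φ : R →+* R') (M : Matrix ι ι R)
    (S : Finset ι) : φ (principalMinor M S) = principalMinor (M.map φ) S :=
  φ.map_det _

theorem principalMinor_transpose (M : Matrix ι ι R) (S : Finset ι) :
    principalMinor Mᵀ S = principalMinor M S :=
  Matrix.det_transpose _

theorem principalMinor_submatrix {κ : Type*} [DecidableEq κ] (M : Matrix ι ι R) (f : κ ↪ ι)
    (S : Finset κ) : principalMinor (M.submatrix f f) S = principalMinor M (S.map f) :=
  Matrix.det_submatrix_equiv_self (S.equivMap f) (M.submatrix ((↑) : S.map f → ι) (↑))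

variable [Fintype ι]

theorem principalMinor_univ (M : Matrix ι ι R) : principalMinor M Finset.univ = M.det :=
  Matrix.det_submatrix_equiv_self (Equiv.subtypeUnivEquiv Finset.mem_univ) M

theorem det_eq_principalMinor_mul_compl {M : Matrix ι ι R} {S : Finset ι}
    (h : ∀ i ∉ S, ∀ j ∈ S, M i j = 0) :
    M.det = principalMinor M S * principalMinor M Sᶜ := by
  have hcompl : principalMinor M Sᶜ = (M.toSquareBlockProp (· ∉ S)).det := by
    rw [← Matrix.det_submatrix_equiv_self (Equiv.subtypeEquivRight fun _ => Finset.mem_compl)]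
    rfl
  rw [Matrix.twoBlockTriangular_det M (· ∈ S) h, hcompl, principalMinor]
  congr!

theorem adjugate_diag_eq_principalMinor (M : Matrix ι ι R) (i : ι) :
    M.adjugate i i = principalMinor M {i}ᶜ := by
  rw [Matrix.adjugate_apply, det_eq_principalMinor_mul_compl (S := {i}ᶜ), compl_compl]
  · have hone : principalMinor (M.updateRow i (Pi.single i 1)) {i} = 1 := by
      refine (principalMinor_congr fun k hk l hl => ?_).trans (principalMinor_one {i})
      rw [Finset.mem_singleton.mp hk, Finset.mem_singleton.mp hl]
      simp
    rw [hone, mul_one]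
    refine principalMinor_congr fun k hk l _ => ?_
    rw [Matrix.updateRow_ne (by simpa using hk)]
  · intro k hk l hl
    rw [Finset.notMem_compl, Finset.mem_singleton] at hk
    rw [hk, Matrix.updateRow_self, Pi.single_eq_of_ne (by simpa using hl)]

theorem detr_two_eq_sum_principalMinor (M : Matrix ι ι R) :
    detr 2 M = ∑ S : Finset ι, principalMinor M S * principalMinor M Sᶜ := by
  rw [← Fintype.card_bool, detr_card_eq_sum_det Bool M]
  refine Finset.sum_nbij' (fun f => Finset.univ.filter fun i => f i) (fun S i => decide (i ∈ S))
    (by simp) (by simp) (by simp) (by simp) fun f _ => ?_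
  set S : Finset ι := Finset.univ.filter fun i => f i with hS
  have hmem (i : ι) : f i = true ↔ i ∈ S := by simp [hS]
  have hblock {i j : ι} (h : i ∈ S ↔ j ∈ S) :
      Matrix.of (fun i j => if f i = f j then M i j else 0) i j = M i j :=
    if_pos (by rwa [Bool.eq_iff_iff, hmem, hmem])
  have hoff {i j : ι} (hi : i ∉ S) (hj : j ∈ S) :
      Matrix.of (fun i j => if f i = f j then M i j else 0) i j = 0 :=
    if_neg fun h => hi ((hmem i).mp (h.trans ((hmem j).mpr hj)))
  rw [det_eq_principalMinor_mul_compl fun i hi j hj => hoff hi hj,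
    principalMinor_congr fun i hi j hj => hblock (iff_of_true hi hj),
    principalMinor_congr fun i hi j hj => hblock <|
      iff_of_false (Finset.mem_compl.mp hi) (Finset.mem_compl.mp hj)]

/-- The sum of the products `M[Sᶜ] * M[(T \ S)ᶜ]` of principal minors over `S ⊆ T`. It interpolates
between `det M ^ 2` at `T = ∅` and `detr 2 M` at `T = univ`. -/
def minorProductSum (M : Matrix ι ι R) (T : Finset ι) : R :=
  ∑ S ∈ T.powerset, principalMinor M Sᶜ * principalMinor M (T \ S)ᶜ

theorem minorProductSum_empty (M : Matrix ι ι R) : minorProductSum M ∅ = M.det ^ 2 := by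
  simp [minorProductSum, principalMinor_univ, sq]

theorem minorProductSum_singleton (M : Matrix ι ι R) (i : ι) :
    minorProductSum M {i} = 2 * (principalMinor M {i}ᶜ * M.det) := by
  have h : minorProductSum M {i}
      = M.det * principalMinor M {i}ᶜ + principalMinor M {i}ᶜ * M.det := by
    rw [minorProductSum, ← insert_empty_eq i, Finset.sum_powerset_insert (Finset.notMem_empty i)]
    simp only [Finset.powerset_empty, Finset.sum_singleton, Finset.sdiff_self, Finset.sdiff_empty,
      Finset.compl_empty, principalMinor_univ]
  rw [h]
  ring

theorem minorProductSum_transpose (M : Matrix ι ι R) (T : Finset ι) :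
    minorProductSum Mᵀ T = minorProductSum M T := by
  simp only [minorProductSum, principalMinor_transpose]

theorem minorProductSum_univ (M : Matrix ι ι R) : minorProductSum M Finset.univ = detr 2 M := by
  rw [minorProductSum, Finset.powerset_univ, detr_two_eq_sum_principalMinor]
  simp only [← Finset.compl_eq_univ_sdiff, compl_compl, mul_comm]

theorem map_minorProductSum {R' : Type*} [CommRing R'] (φ : R →+* R') (M : Matrix ι ι R)
    (T : Finset ι) : φ (minorProductSum M T) = minorProductSum (M.map φ) T := by
  simp only [minorProductSum, map_sum, map_mul, map_principalMinor]

theorem inv_diag_eq_principalMinor_div {K : Type*} [Field K] (M : Matrix ι ι K) (i : ι) :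
    M⁻¹ i i = principalMinor M {i}ᶜ / M.det := by
  rw [Matrix.inv_def, Matrix.smul_apply, adjugate_diag_eq_principalMinor, Ring.inverse_eq_inv',
    smul_eq_mul, div_eq_inv_mul]

end PrincipalMinors

section Derivations

variable {R A : Type*} [CommRing R] [CommRing A] [Algebra R A] {ι : Type*} [Fintype ι]
  [DecidableEq ι]

theorem derivation_det_eq_zero (D : Derivation R A A) {M : Matrix ι ι A}
    (h : ∀ i j, D (M i j) = 0) : D M.det = 0 := by
  have hprod (σ : Equiv.Perm ι) : D (∏ i, M (σ i) i) = 0 :=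
    Finset.prod_induction _ (fun x => D x = 0) (fun x y hx hy => by simp [hx, hy]) (by simp)
      fun i _ => h _ _
  rw [Matrix.det_apply', map_sum]
  exact Finset.sum_eq_zero fun σ _ => by simp [hprod]

theorem derivation_det_eq_sum_mul_adjugate (D : Derivation R A A) {M : Matrix ι ι A} {i : ι}
    (h : ∀ k ≠ i, ∀ j, D (M k j) = 0) : D M.det = ∑ j, D (M i j) * M.adjugate j i := by
  have hcofactor (j : ι) : D (M.adjugate j i) = 0 := by
    rw [Matrix.adjugate_apply]
    refine derivation_det_eq_zero D fun k l => ?_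
    rcases eq_or_ne k i with rfl | hk
    · rcases eq_or_ne l j with rfl | hl <;> simp [*]
    · simpa [hk] using h k hk l
  rw [Matrix.det_eq_sum_mul_adjugate_row M i, map_sum]
  refine Finset.sum_congr rfl fun j _ => ?_
  rw [Derivation.leibniz, hcofactor, smul_zero, zero_add, smul_eq_mul, mul_comm]

end Derivations

section Pencil

variable {ι R : Type*} [DecidableEq ι] [CommRing R]

/-- The matrix `diag(X₁, …, Xₙ) + B` with multivariate polynomial entries. -/
noncomputable def pencil (B : Matrix ι ι R) : Matrix ι ι (MvPolynomial ι R) :=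
  Matrix.diagonal MvPolynomial.X + B.map MvPolynomial.C

theorem map_pencil_eval₂Hom {R' : Type*} [CommRing R'] (φ : R →+* R') (z : ι → R')
    (B : Matrix ι ι R) :
    (pencil B).map (MvPolynomial.eval₂Hom φ z) = Matrix.diagonal z + B.map φ := by
  ext i j
  simp [pencil, Matrix.diagonal_apply, apply_ite]

theorem map_pencil_map {R' : Type*} [CommRing R'] (φ : R →+* R') (B : Matrix ι ι R) :
    (pencil B).map (MvPolynomial.map φ) = pencil (B.map φ) := by
  ext1 i j
  rcases eq_or_ne i j with rfl | h
  · simp [pencil]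
  · simp [pencil, h]

theorem transpose_pencil (B : Matrix ι ι R) : (pencil B)ᵀ = pencil Bᵀ := by
  rw [pencil, Matrix.transpose_add, Matrix.diagonal_transpose, ← Matrix.transpose_map, pencil]

theorem pderiv_pencil_apply (B : Matrix ι ι R) (i k l : ι) :
    MvPolynomial.pderiv i (pencil B k l) = if k = i ∧ l = i then 1 else 0 := by
  rcases eq_or_ne k l with rfl | h
  · simp [pencil, MvPolynomial.pderiv_X, Pi.single_apply, eq_comm]
  · have : ¬(k = i ∧ l = i) := by grind
    simp [pencil, h, this]

theorem pderiv_principalMinor_pencil (B : Matrix ι ι R) {S : Finset ι} {i : ι} (hi : i ∈ S) :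
    MvPolynomial.pderiv i (principalMinor (pencil B) S)
      = principalMinor (pencil B) (S.erase i) := by
  have herase : ({⟨i, hi⟩}ᶜ : Finset S).map (.subtype (· ∈ S)) = S.erase i := by
    ext k; simp [and_comm]
  rw [principalMinor, derivation_det_eq_sum_mul_adjugate (i := ⟨i, hi⟩),
    Finset.sum_eq_single ⟨i, hi⟩]
  · rw [adjugate_diag_eq_principalMinor, Matrix.submatrix_apply, pderiv_pencil_apply,
      if_pos ⟨rfl, rfl⟩, one_mul, ← herase]
    exact principalMinor_submatrix _ (.subtype (· ∈ S)) _
  · intro l _ hl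
    simp [pderiv_pencil_apply, Subtype.ext_iff.not.mp hl]
  · simp
  · intro k hk l
    simp [pderiv_pencil_apply, Subtype.ext_iff.not.mp hk]

variable [Fintype ι]

theorem degreeOf_det_pencil_le (B : Matrix ι ι R) (i : ι) :
    (pencil B).det.degreeOf i ≤ 1 := by
  have hentry (k l : ι) : (pencil B k l).degreeOf i ≤ if k = i then 1 else 0 := by
    rcases eq_or_ne k l with rfl | h
    · simp only [pencil, Matrix.add_apply, Matrix.diagonal_apply_eq, Matrix.map_apply]
      refine (MvPolynomial.degreeOf_add_le i _ _).trans
        (max_le ?_ (by simp [MvPolynomial.degreeOf_C]))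
      rcases eq_or_ne k i with rfl | hk
      · simpa using MvPolynomial.degreeOf_mul_X_self k (1 : MvPolynomial ι R)
      · simp [MvPolynomial.degreeOf_X_of_ne hk.symm]
    · simp [pencil, h, MvPolynomial.degreeOf_C]
  rw [← Matrix.det_transpose, Matrix.det_apply']
  refine (MvPolynomial.degreeOf_sum_le i _ _).trans (Finset.sup_le fun σ _ => ?_)
  have hsign : ((Equiv.Perm.sign σ : ℤ) : MvPolynomial ι R).degreeOf i ≤ 0 := by
    rw [← map_intCast (MvPolynomial.C : R →+* MvPolynomial ι R), MvPolynomial.degreeOf_C]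
  calc _ ≤ 0 + ∑ k, (pencil B k (σ k)).degreeOf i :=
        (MvPolynomial.degreeOf_mul_le i _ _).trans
          (add_le_add hsign (MvPolynomial.degreeOf_prod_le i _ _))
    _ ≤ 0 + ∑ k, if k = i then 1 else 0 := by gcongr; exact hentry _ _
    _ = 1 := by simp

theorem pderiv_principalMinor_pencil_compl (B : Matrix ι ι R) {S : Finset ι} {i : ι} (hi : i ∉ S) :
    MvPolynomial.pderiv i (principalMinor (pencil B) Sᶜ)
      = principalMinor (pencil B) (insert i S)ᶜ := by
  rw [pderiv_principalMinor_pencil B (Finset.mem_compl.mpr hi), Finset.compl_insert]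

theorem pderiv_minorProductSum_pencil (B : Matrix ι ι R) {T : Finset ι} {i : ι} (hi : i ∉ T) :
    MvPolynomial.pderiv i (minorProductSum (pencil B) T)
      = minorProductSum (pencil B) (insert i T) := by
  simp only [minorProductSum]
  rw [Finset.sum_powerset_insert hi, map_sum, ← Finset.sum_add_distrib]
  refine Finset.sum_congr rfl fun S hS => ?_
  have hiS : i ∉ S := fun h => hi (Finset.mem_powerset.mp hS h)
  rw [MvPolynomial.pderiv_mul, pderiv_principalMinor_pencil_compl B hiS,
    pderiv_principalMinor_pencil_compl B fun h => hi (Finset.mem_sdiff.mp h).1,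
    Finset.insert_sdiff_of_notMem T hiS, Finset.insert_sdiff_insert,
    Finset.sdiff_insert_of_notMem hi, add_comm]

end Pencil

section PositiveDefinite

open scoped ComplexOrder

theorem exists_map_ofReal_eq {ι : Type*} {p : MvPolynomial ι ℂ}
    (h : MvPolynomial.map (starRingEnd ℂ) p = p) :
    ∃ q : MvPolynomial ι ℝ, MvPolynomial.map (algebraMap ℝ ℂ) q = p := by
  refine MvPolynomial.mem_range_map_iff_coeffs_subset.mpr fun c hc => ?_
  obtain ⟨m, -, rfl⟩ := MvPolynomial.mem_coeffs_iff.mp hc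
  refine ⟨(p.coeff m).re, Complex.conj_eq_iff_re.mp ?_⟩
  rw [← MvPolynomial.coeff_map, h]

theorem posDef_diagonal_add {ι : Type*} [DecidableEq ι] {B : Matrix ι ι ℂ}
    (hB : B.PosDef) {x : ι → ℝ} (hx : 0 ≤ x) :
    (Matrix.diagonal (fun i => (x i : ℂ)) + B).PosDef :=
  hB.posSemidef_add (Matrix.PosSemidef.diagonal fun i => by simpa using hx i)

variable {ι : Type*} [Fintype ι] [DecidableEq ι] {B : Matrix ι ι ℂ}

theorem det_diagonal_add_ne_zero (hB : B.IsHermitian) {z : ι → ℂ} (hz : ∀ i, 0 < (z i).im) :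
    (Matrix.diagonal z + B).det ≠ 0 := by
  intro hdet
  obtain ⟨v, hv, hker⟩ := Matrix.exists_mulVec_eq_zero_iff.mpr hdet
  have hform : (star v ⬝ᵥ (Matrix.diagonal z + B) *ᵥ v).im
      = ∑ i, (z i).im * Complex.normSq (v i) := by
    have hdiag (i : ι) : star (v i) * (z i * v i) = z i * (Complex.normSq (v i) : ℂ) := by
      rw [Complex.normSq_eq_conj_mul_self, Complex.star_def]; ring
    have hBv : (star v ⬝ᵥ B *ᵥ v).im = 0 := hB.im_star_dotProduct_mulVec_self v
    rw [Matrix.add_mulVec, dotProduct_add, Complex.add_im, hBv, add_zero, dotProduct,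
      Complex.im_sum]
    refine Finset.sum_congr rfl fun i _ => ?_
    rw [Matrix.mulVec_diagonal, Pi.star_apply, hdiag, Complex.im_mul_ofReal]
  obtain ⟨i, hi⟩ := Function.ne_iff.mp hv
  refine (Finset.sum_pos' (fun k _ => mul_nonneg (hz k).le (Complex.normSq_nonneg (v k)))
    ⟨i, Finset.mem_univ i, mul_pos (hz i) (Complex.normSq_pos.mpr hi)⟩).ne' ?_
  rw [← hform, hker, dotProduct_zero, Complex.zero_im]

theorem minorProductSum_pos (hB : B.PosDef) (T : Finset ι) : 0 < minorProductSum B T :=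
  have hminor (S : Finset ι) : 0 < principalMinor B S :=
    (hB.submatrix Subtype.val_injective).det_pos
  Finset.sum_pos (fun _ _ => mul_pos (hminor _) (hminor _)) ⟨∅, Finset.empty_mem_powerset T⟩

variable {q : MvPolynomial ι ℝ} {T : Finset ι}

theorem exists_map_eq_minorProductSum_pencil (hB : B.IsHermitian) (T : Finset ι) :
    ∃ q : MvPolynomial ι ℝ,
      MvPolynomial.map (algebraMap ℝ ℂ) q = minorProductSum (pencil B) T := by
  refine exists_map_ofReal_eq ?_
  have hconj : B.map (starRingEnd ℂ) = Bᵀ := by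
    rw [← Matrix.transpose_transpose (B.map _), ← Matrix.transpose_map]
    exact congrArg _ hB.eq
  rw [map_minorProductSum, map_pencil_map, hconj, ← transpose_pencil, minorProductSum_transpose]

theorem aeval_eq_minorProductSum
    (hq : MvPolynomial.map (algebraMap ℝ ℂ) q = minorProductSum (pencil B) T) (z : ι → ℂ) :
    MvPolynomial.aeval z q = minorProductSum (Matrix.diagonal z + B) T := by
  have h := map_minorProductSum (MvPolynomial.eval₂Hom (RingHom.id ℂ) z) (pencil B) T
  rw [map_pencil_eval₂Hom, RingHom.coe_id, Matrix.map_id] at h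
  rw [← h, ← hq, MvPolynomial.aeval_def, ← MvPolynomial.eval_map]
  rfl

theorem ofReal_aeval_eq_minorProductSum
    (hq : MvPolynomial.map (algebraMap ℝ ℂ) q = minorProductSum (pencil B) T) (x : ι → ℝ) :
    ((MvPolynomial.aeval x q : ℝ) : ℂ)
      = minorProductSum (Matrix.diagonal (fun i => (x i : ℂ)) + B) T := by
  rw [← aeval_eq_minorProductSum hq, aeval_ofReal]

theorem isAboveRoots_zero_of_map_eq_minorProductSum (hB : B.PosDef)
    (hq : MvPolynomial.map (algebraMap ℝ ℂ) q = minorProductSum (pencil B) T) :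
    IsAboveRoots 0 q := fun x hx => by
  rw [← Complex.zero_lt_real, ofReal_aeval_eq_minorProductSum hq]
  exact minorProductSum_pos (posDef_diagonal_add hB hx) T

theorem isRealStable_of_map_eq_minorProductSum (hB : B.IsHermitian)
    (hq : MvPolynomial.map (algebraMap ℝ ℂ) q = minorProductSum (pencil B) ∅) :
    IsRealStable q := fun z hz => by
  rw [aeval_eq_minorProductSum hq, minorProductSum_empty]
  exact pow_ne_zero 2 (det_diagonal_add_ne_zero hB hz)

theorem degreeOf_le_two_of_map_eq_minorProductSum
    (hq : MvPolynomial.map (algebraMap ℝ ℂ) q = minorProductSum (pencil B) ∅) (i : ι) :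
    q.degreeOf i ≤ 2 := by
  have hmap : q.degreeOf i = (MvPolynomial.map (algebraMap ℝ ℂ) q).degreeOf i := by
    rw [MvPolynomial.degreeOf, MvPolynomial.degreeOf,
      MvPolynomial.degrees_map_of_injective _ (algebraMap ℝ ℂ).injective]
  rw [hmap, hq, minorProductSum_empty]
  exact (MvPolynomial.degreeOf_pow_le i _ 2).trans
    (Nat.mul_le_mul_left 2 (degreeOf_det_pencil_le B i))

theorem barrier_zero_of_map_eq_minorProductSum (hB : B.PosDef)
    (hq : MvPolynomial.map (algebraMap ℝ ℂ) q = minorProductSum (pencil B) ∅) (i : ι) :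
    barrier q i 0 = 2 * (B⁻¹ i i).re := by
  have hpderiv : MvPolynomial.map (algebraMap ℝ ℂ) (MvPolynomial.pderiv i q)
      = minorProductSum (pencil B) {i} := by
    rw [← MvPolynomial.pderiv_map, hq, pderiv_minorProductSum_pencil B (Finset.notMem_empty i),
      insert_empty_eq]
  have hdet : B.det ≠ 0 := hB.det_pos.ne'
  have hbarrier : (barrier q i 0 : ℂ) = 2 * B⁻¹ i i := by
    rw [barrier, Complex.ofReal_div, ofReal_aeval_eq_minorProductSum hq,
      ofReal_aeval_eq_minorProductSum hpderiv, minorProductSum_empty, minorProductSum_singleton,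
      inv_diag_eq_principalMinor_div]
    simp only [Pi.zero_apply, Complex.ofReal_zero, Matrix.diagonal_zero, zero_add]
    field_simp
  simpa using congrArg Complex.re hbarrier

theorem detr_two_diagonal_add_pos (hB : B.PosDef) {δ : ι → ℝ} (hδ : 0 ≤ δ)
    (hle : ∀ i, 4 * δ i * (B⁻¹ i i).re ≤ 1) {x : ι → ℝ} (hx : -δ ≤ x) :
    0 < detr 2 (Matrix.diagonal (fun i => (x i : ℂ)) + B) := by
  choose q hq using exists_map_eq_minorProductSum_pencil hB.isHermitian
  have habove (T : Finset ι) : IsAboveRoots 0 (q T) :=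
    isAboveRoots_zero_of_map_eq_minorProductSum hB (hq T)
  have hne (T : Finset ι) : q T ≠ 0 := fun h => by simpa [h] using habove T 0 le_rfl
  have hpderiv (i : ι) (T : Finset ι) (hi : i ∉ T) :
      q (insert i T) = MvPolynomial.pderiv i (q T) := by
    refine MvPolynomial.map_injective _ (algebraMap ℝ ℂ).injective ?_
    rw [hq, ← MvPolynomial.pderiv_map, hq, pderiv_minorProductSum_pencil B hi]
  have hbarrier (i : ι) : 2 * δ i * barrier (q ∅) i 0 ≤ 1 := by
    rw [barrier_zero_of_map_eq_minorProductSum hB (hq ∅)]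
    linarith [hle i]
  have hstable := isRealStable_of_map_eq_minorProductSum hB.isHermitian (hq ∅)
  have hpos := hstable.isAboveRoots_of_pderiv_chain
    (degreeOf_le_two_of_map_eq_minorProductSum (hq ∅)) (habove ∅) hne hpderiv hδ hbarrier x
    (by simpa using hx)
  rwa [← minorProductSum_univ, ← ofReal_aeval_eq_minorProductSum (hq _), Complex.zero_lt_real]

theorem exists_lt_neg_inv_of_detr_two_eq_zero (hB : B.PosDef) {t : ℝ}
    (ht : detr 2 (Matrix.diagonal (fun _ => (t : ℂ)) + B) = 0) :
    ∃ i, t < -(1 / (4 * (B⁻¹ i i).re)) := by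
  have hinv (i : ι) : 0 < (B⁻¹ i i).re := (Complex.pos_iff.mp hB.inv.diag_pos).1
  by_contra! hle
  refine (detr_two_diagonal_add_pos hB (δ := fun i => 1 / (4 * (B⁻¹ i i).re))
    (x := fun _ => t) (fun i => ?_) (fun i => ?_) hle).ne' ht
  · exact one_div_nonneg.mpr (mul_nonneg zero_le_four (hinv i).le)
  · rw [mul_one_div, div_mul_eq_mul_div, div_self (mul_pos zero_lt_four (hinv i)).ne']

end PositiveDefinite

theorem eval_chir {n : ℕ} (r : ℕ) (A : Matrix (Fin n) (Fin n) ℂ) (b x : ℂ) :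
    (chir r A).eval x
      = detr r (Matrix.diagonal (fun _ => x - b) + (b • (1 : Matrix (Fin n) (Fin n) ℂ) - A)) := by
  have hentry (i j : Fin n) : (charmatrix A i j).eval x
      = (Matrix.diagonal (fun _ => x - b) + (b • 1 - A) : Matrix (Fin n) (Fin n) ℂ) i j := by
    rcases eq_or_ne i j with rfl | h
    · simp [charmatrix_apply_eq]
    · simp [h]
  simp only [chir, detr, eval_finsetSum, eval_mul, eval_prod, hentry, eval_pow, eval_natCast,
    eval_intCast]

open scoped ComplexOrder in
theorem posDef_smul_one_sub {ι : Type*} [Fintype ι] [DecidableEq ι] {A : Matrix ι ι ℂ}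
    (hA : A.IsHermitian) {b : ℝ} (hb : ∀ i, hA.eigenvalues i < b) :
    ((b : ℂ) • (1 : Matrix ι ι ℂ) - A).PosDef := by
  have hscalar : (b : ℂ) • (1 : Matrix ι ι ℂ) = algebraMap ℝ (Matrix ι ι ℂ) b := by
    rw [Algebra.algebraMap_eq_smul_one, Complex.coe_smul]
  have hB : ((b : ℂ) • (1 : Matrix ι ι ℂ) - A).IsHermitian :=
    (Matrix.isHermitian_one.smul (Complex.conj_ofReal b)).sub hA
  refine hB.posDef_iff_eigenvalues_pos.mpr fun i => ?_
  have hmem := hB.spectrum_real_eq_range_eigenvalues ▸ Set.mem_range_self i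
  generalize hB.eigenvalues i = μ at hmem ⊢
  rw [hscalar, ← spectrum.singleton_sub_eq, hA.spectrum_real_eq_range_eigenvalues] at hmem
  obtain ⟨_, rfl, _, ⟨k, rfl⟩, rfl⟩ := hmem
  exact sub_pos.mpr (hb k)

/-- Root bound for the 2-characteristic polynomial: if `b` exceeds the largest eigenvalue
of the Hermitian matrix `A`, then every real root `x` of `χ₂[A]` satisfies
`x ≤ b - min_i 1/(4((bI - A)^{-1})_{ii})`. -/
theorem chir_two_root_bound {n : ℕ} (hn : 0 < n)
    (A : Matrix (Fin n) (Fin n) ℂ) (hA : A.IsHermitian)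
    (b : ℝ) (hb : ∀ i, hA.eigenvalues i < b)
    (x : ℝ) (hx : (chir 2 A).IsRoot (x : ℂ)) :
    x ≤ b - Finset.univ.inf' (Finset.univ_nonempty_iff.mpr ⟨⟨0, hn⟩⟩)
      (fun i => 1 / (4 * (((((b : ℂ) • (1 : Matrix (Fin n) (Fin n) ℂ)) - A)⁻¹ i i).re))) := by
  have hdetr := (eval_chir 2 A b x).symm.trans hx
  obtain ⟨i, hi⟩ := exists_lt_neg_inv_of_detr_two_eq_zero (posDef_smul_one_sub hA hb) (t := x - b)
    (by simpa only [Complex.ofReal_sub] using hdetr)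
  have hmin := Finset.inf'_le (fun i => 1 / (4 * (((b : ℂ) • (1 : Matrix (Fin n) (Fin n) ℂ) - A)⁻¹
    i i).re)) (Finset.mem_univ i)
  linarith
end

section
/- Let q be a real stable polynomial in the variables z₁,…,z_n whose degree in the variable z_i is at most 3, let z ∈ ℝ^n be above the roots of q, and suppose Φ_q^i(z) > 0. Set δ := 4/(3Φ_q^i(z)). Then for every j ∈ {1,…,n}: (q·∂_j∂_i²q − (∂_j q)·(∂_i²q))(z) ≤ δ·(q·∂_j∂_i³q − (∂_j q)·(∂_i³q))(z); equivalently, ∂_j(∂_i²q/q)(z) ≤ δ·∂_j(∂_i³q/q)(z) as derivatives of rational functions evaluated at z. -/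
open Polynomial

/-- A polynomial with real coefficients is real stable if it has no zero all of whose
coordinates have strictly positive imaginary part. -/
def RealStable {n : ℕ} (p : MvPolynomial (Fin n) ℝ) : Prop :=
  ∀ z : Fin n → ℂ, (∀ k, 0 < (z k).im) → MvPolynomial.aeval z p ≠ 0

/-- `z ∈ ℝ^n` is above the roots of `p` if `p` does not vanish on the nonnegative orthant
based at `z`. -/
def AboveRoots {n : ℕ} (p : MvPolynomial (Fin n) ℝ) (z : Fin n → ℝ) : Prop :=
  ∀ t : Fin n → ℝ, (∀ k, 0 ≤ t k) → MvPolynomial.eval (z + t) p ≠ 0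

/-- The barrier function `Φ_p^i(z) = (∂ᵢp)(z)/p(z)`. -/
noncomputable def Phi {n : ℕ} (p : MvPolynomial (Fin n) ℝ) (i : Fin n) (z : Fin n → ℝ) : ℝ :=
  MvPolynomial.eval z (MvPolynomial.pderiv i p) / MvPolynomial.eval z p

/-!
Restrict `q` and `∂_j q` to the line `s ↦ z + s eᵢ`, obtaining real polynomials `f` and `g`.
Real stability keeps the zeros of `q` out of the upper half plane and makes `g / f` map the upper
half plane to the closed lower one. After the substitution `u = -1 / s` the polynomial `f` becomes
a multiple of `∏ (u - r)` with all `r ≥ 0` and `∑ r = Φ`, and `g - (g(0) / f(0)) f` becomes a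
numerator `K` of smaller degree. A rational function `K / ∏ (u - r)` mapping the upper half plane to
the closed lower one has simple poles with nonnegative residues, so `K` is a nonnegative combination
of the products `∏_{t ≠ r} (u - t)`. The estimate is a linear inequality between two coefficients of
`K`; on each product it reduces to Newton's inequality for the first two elementary symmetric
functions of the remaining roots.
-/

section UpperHalfPlane

variable {p : ℂ[X]}

theorem im_nonpos_of_mem_roots (h : ∀ s : ℂ, 0 < s.im → p.eval s ≠ 0) {r : ℂ}
    (hr : r ∈ p.roots) : r.im ≤ 0 :=
  not_lt.1 fun hpos ↦ h r hpos (isRoot_of_mem_roots hr)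

theorem norm_sub_le_norm_add_mul_I_sub {r s : ℂ} {t : ℝ} (hrs : r.im ≤ s.im) (ht : 0 ≤ t) :
    ‖s - r‖ ≤ ‖s + t * Complex.I - r‖ := by
  rw [← sq_le_sq₀ (norm_nonneg _) (norm_nonneg _), ← Complex.normSq_eq_norm_sq,
    ← Complex.normSq_eq_norm_sq, Complex.normSq_apply, Complex.normSq_apply]
  simp only [Complex.sub_re, Complex.sub_im, Complex.add_re, Complex.add_im,
    Complex.re_ofReal_mul, Complex.im_ofReal_mul, Complex.I_re, Complex.I_im]
  nlinarith [mul_nonneg (sub_nonneg.2 hrs) ht]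

theorem norm_eval_le_norm_eval_add_mul_I (h : ∀ s : ℂ, 0 < s.im → p.eval s ≠ 0) {s : ℂ}
    (hs : 0 ≤ s.im) {t : ℝ} (ht : 0 ≤ t) : ‖p.eval s‖ ≤ ‖p.eval (s + t * Complex.I)‖ := by
  have norm_eval (w : ℂ) : ‖p.eval w‖ = ‖p.leadingCoeff‖ * (p.roots.map (‖w - ·‖)).prod := by
    rw [(IsAlgClosed.splits p).eval_eq_prod_roots, norm_mul]
    exact congrArg _
      ((map_multiset_prod (normHom : ℂ →*₀ ℝ) _).trans (by rw [Multiset.map_map]; rfl))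
  rw [norm_eval, norm_eval]
  gcongr
  refine Multiset.prod_map_le_prod_map₀ _ _ (fun r _ ↦ norm_nonneg _) fun r hr ↦ ?_
  exact norm_sub_le_norm_add_mul_I_sub ((im_nonpos_of_mem_roots h hr).trans hs) ht

theorem im_eval_derivative_mul_conj_eval_nonpos (h : ∀ s : ℂ, 0 < s.im → p.eval s ≠ 0) {s : ℂ}
    (hs : 0 ≤ s.im) : (p.derivative.eval s * starRingEnd ℂ (p.eval s)).im ≤ 0 := by
  rcases eq_or_ne (p.eval s) 0 with hps | hps
  · simp only [hps, map_zero, mul_zero, Complex.zero_im, le_refl]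
  have im_div : (p.derivative.eval s / p.eval s).im ≤ 0 := by
    rw [(IsAlgClosed.splits p).eval_derivative_div_eval_of_ne_zero hps,
      ← Complex.coe_imAddGroupHom, map_multiset_sum, Multiset.map_map]
    refine Multiset.sum_induction (· ≤ 0) _ (fun _ _ ↦ add_nonpos) le_rfl fun x hx ↦ ?_
    obtain ⟨r, hr, rfl⟩ := Multiset.mem_map.1 hx
    have : r.im ≤ s.im := (im_nonpos_of_mem_roots h hr).trans hs
    simp only [Function.comp_apply, Complex.coe_imAddGroupHom, one_div, Complex.inv_im,
      Complex.sub_im]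
    exact div_nonpos_of_nonpos_of_nonneg (by linarith) (Complex.normSq_nonneg _)
  have factor : p.derivative.eval s * starRingEnd ℂ (p.eval s) =
      (Complex.normSq (p.eval s) : ℝ) * (p.derivative.eval s / p.eval s) := by
    rw [← Complex.mul_conj]
    field_simp
  rw [factor, Complex.im_ofReal_mul]
  exact mul_nonpos_of_nonneg_of_nonpos (Complex.normSq_nonneg _) im_div

end UpperHalfPlane

section PartialDerivatives

variable {σ : Type*}

theorem degreeOf_pderiv_le_s17 {A : Type*} [CommSemiring A] (i j : σ)
    (q : MvPolynomial σ A) :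
    (MvPolynomial.pderiv j q).degreeOf i ≤ q.degreeOf i := by
  rw [MvPolynomial.degreeOf_le_iff]
  intro m hm
  rw [MvPolynomial.mem_support_iff, MvPolynomial.coeff_pderiv] at hm
  have le_degreeOf := MvPolynomial.monomial_le_degreeOf i
    (MvPolynomial.mem_support_iff.2 (left_ne_zero_of_mul hm))
  exact le_trans (by simp) le_degreeOf

theorem pderiv_pderiv_comm {A : Type*} [CommRing A] (i j : σ)
    (q : MvPolynomial σ A) :
    MvPolynomial.pderiv i (MvPolynomial.pderiv j q) =
      MvPolynomial.pderiv j (MvPolynomial.pderiv i q) := by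
  classical
  have commutator : ⁅(MvPolynomial.pderiv i : Derivation A (MvPolynomial σ A) _),
      (MvPolynomial.pderiv j : Derivation A (MvPolynomial σ A) (MvPolynomial σ A))⁆ = 0 :=
    MvPolynomial.derivation_ext fun k ↦ by
      rw [Derivation.commutator_apply]
      simp only [MvPolynomial.pderiv_X, Pi.single_apply]
      split_ifs <;> simp
  rw [← sub_eq_zero, ← Derivation.commutator_apply, commutator, Derivation.zero_apply]

theorem pderiv_iterate_pderiv_comm {A : Type*} [CommRing A] (i j : σ) (q : MvPolynomial σ A)
    (k : ℕ) :
    MvPolynomial.pderiv j ((MvPolynomial.pderiv i)^[k] q) =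
      (MvPolynomial.pderiv i)^[k] (MvPolynomial.pderiv j q) :=
  Function.Commute.iterate_right (fun p ↦ pderiv_pderiv_comm j i p) k q

end PartialDerivatives

section CoordinateLine

variable {σ A : Type*} [DecidableEq σ] [CommSemiring A]

/-- The restriction of a multivariate polynomial `q` to the line through `z` in the direction of
the `i`-th coordinate axis, as a univariate polynomial `q (z + X eᵢ)`. -/
noncomputable def coordLine (q : MvPolynomial σ A) (z : σ → A) (i : σ) : A[X] :=
  MvPolynomial.aeval (fun k ↦ C (z k) + (Pi.single i X : σ → A[X]) k) q

theorem aeval_coordLine {B : Type*} [CommSemiring B] [Algebra A B] (q : MvPolynomial σ A)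
    (z : σ → A) (i : σ) (s : B) :
    aeval s (coordLine q z i) = MvPolynomial.aeval (algebraMap A B ∘ z + Pi.single i s) q := by
  rw [coordLine, MvPolynomial.comp_aeval_apply]
  congr 2
  ext k
  rcases eq_or_ne k i with rfl | hk
  · simp
  · simp [hk]

theorem derivative_coordLine (q : MvPolynomial σ A) (z : σ → A) (i : σ) :
    derivative (coordLine q z i) = coordLine (MvPolynomial.pderiv i q) z i := by
  induction q using MvPolynomial.induction_on with
  | C a => simp [coordLine]
  | add p q hp hq => simp_all [coordLine]
  | mul_X p k hp =>
    simp only [coordLine, map_mul, MvPolynomial.aeval_X, derivative_mul, Derivation.leibniz,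
      MvPolynomial.pderiv_X, map_add] at hp ⊢
    rcases eq_or_ne k i with rfl | hk
    · simp [hp]; ring
    · simp [hp, hk]; ring

theorem coeff_zero_coordLine (q : MvPolynomial σ A) (z : σ → A) (i : σ) :
    (coordLine q z i).coeff 0 = MvPolynomial.eval z q := by
  rw [coeff_zero_eq_aeval_zero, aeval_coordLine, Pi.single_zero, add_zero]
  rfl

theorem factorial_mul_coeff_coordLine (q : MvPolynomial σ A) (z : σ → A) (i : σ) (k : ℕ) :
    (k.factorial : A) * (coordLine q z i).coeff k =
      MvPolynomial.eval z ((MvPolynomial.pderiv i)^[k] q) := by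
  have iterate : derivative^[k] (coordLine q z i) = coordLine ((MvPolynomial.pderiv i)^[k] q) z i :=
    (Function.Semiconj.iterate_right (f := fun p ↦ coordLine p z i)
      (fun p ↦ (derivative_coordLine p z i).symm) k q).symm
  rw [← coeff_zero_coordLine _ z i, ← iterate, coeff_iterate_derivative, zero_add,
    Nat.descFactorial_self, nsmul_eq_mul]

theorem natDegree_coordLine_le (q : MvPolynomial σ A) (z : σ → A) (i : σ) :
    (coordLine q z i).natDegree ≤ q.degreeOf i := by
  have natDegree_factor_le (m : σ →₀ ℕ) (k : σ) :
      ((C (z k) + (Pi.single i X : σ → A[X]) k) ^ m k).natDegree ≤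
        (Pi.single i (m i) : σ → ℕ) k := by
    rcases eq_or_ne k i with rfl | hk
    · simpa using natDegree_pow_le_of_le (m k) (natDegree_C_add.trans_le natDegree_X_le)
    · simp only [Pi.single_eq_of_ne hk, add_zero, ← C_pow, natDegree_C, le_refl]
  rw [coordLine, MvPolynomial.aeval_def, MvPolynomial.eval₂_eq]
  refine natDegree_sum_le_of_forall_le _ _ fun m hm ↦ ?_
  calc (C (q.coeff m) * ∏ k ∈ m.support, (C (z k) + (Pi.single i X : σ → A[X]) k) ^ m k).natDegree
      ≤ ∑ k ∈ m.support, ((C (z k) + (Pi.single i X : σ → A[X]) k) ^ m k).natDegree :=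
        (natDegree_C_mul_le _ _).trans (natDegree_prod_le _ _)
    _ ≤ ∑ k ∈ m.support, (Pi.single i (m i) : σ → ℕ) k :=
        Finset.sum_le_sum fun k _ ↦ natDegree_factor_le m k
    _ ≤ m i := by rw [Finset.sum_pi_single']; split_ifs <;> simp
    _ ≤ q.degreeOf i := MvPolynomial.monomial_le_degreeOf i hm

theorem eval_mul_pderiv_iterate_pderiv_sub {R : Type*} [CommRing R] (q : MvPolynomial σ R)
    (z : σ → R) (i j : σ) (k : ℕ) :
    MvPolynomial.eval z (q * MvPolynomial.pderiv j ((MvPolynomial.pderiv i)^[k] q) -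
        MvPolynomial.pderiv j q * (MvPolynomial.pderiv i)^[k] q) =
      k.factorial * ((coordLine q z i).coeff 0 * (coordLine (MvPolynomial.pderiv j q) z i).coeff k -
        (coordLine (MvPolynomial.pderiv j q) z i).coeff 0 * (coordLine q z i).coeff k) := by
  rw [pderiv_iterate_pderiv_comm, map_sub, map_mul, map_mul, ← factorial_mul_coeff_coordLine,
    ← factorial_mul_coeff_coordLine, coeff_zero_coordLine, coeff_zero_coordLine]
  ring

end CoordinateLine

theorem mem_closure_setOf_forall_im_pos {ι : Type*} {w : ι → ℂ} (hw : ∀ k, 0 ≤ (w k).im) :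
    w ∈ closure {v : ι → ℂ | ∀ k, 0 < (v k).im} := by
  have : {v : ι → ℂ | ∀ k, 0 < (v k).im} = Set.univ.pi fun _ ↦ {s : ℂ | 0 < s.im} := by
    ext v
    simp
  rw [this, closure_pi_set, Complex.closure_setOfPred_lt_im]
  exact fun k _ ↦ hw k

theorem continuous_mvPolynomial_aeval {σ R A : Type*} [CommSemiring R] [CommSemiring A]
    [Algebra R A] [TopologicalSpace A] [IsTopologicalSemiring A] (q : MvPolynomial σ R) :
    Continuous fun w : σ → A ↦ MvPolynomial.aeval w q :=
  (MvPolynomial.continuous_eval (q.map (algebraMap R A))).congr fun w ↦ by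
    rw [MvPolynomial.eval_map, MvPolynomial.aeval_def]

theorem eval_coordLine_map_algebraMap {σ R A : Type*} [DecidableEq σ] [CommSemiring R]
    [CommSemiring A] [Algebra R A] (q : MvPolynomial σ R) (w : σ → A) (i : σ) (s : A) :
    (coordLine (q.map (algebraMap R A)) w i).eval s = MvPolynomial.aeval (w + Pi.single i s) q := by
  rw [← coe_aeval_eq_eval, aeval_coordLine, MvPolynomial.aeval_map_algebraMap]
  rfl

namespace RealStable

variable {n : ℕ} {q : MvPolynomial (Fin n) ℝ} {w : Fin n → ℂ}

theorem eval_coordLine_ne_zero (hq : RealStable q) (hw : ∀ k, 0 < (w k).im) (i : Fin n) (s : ℂ)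
    (hs : 0 < s.im) : (coordLine (q.map (algebraMap ℝ ℂ)) w i).eval s ≠ 0 := by
  rw [eval_coordLine_map_algebraMap]
  refine hq _ fun k ↦ ?_
  rcases eq_or_ne k i with rfl | hk
  · simpa using add_pos (hw k) hs
  · simpa [hk] using hw k

theorem im_aeval_pderiv_mul_conj_aeval_nonpos (hq : RealStable q) (hw : ∀ k, 0 ≤ (w k).im)
    (i : Fin n) :
    (MvPolynomial.aeval w (MvPolynomial.pderiv i q) *
      starRingEnd ℂ (MvPolynomial.aeval w q)).im ≤ 0 := by
  have closed : IsClosed {v : Fin n → ℂ | (MvPolynomial.aeval v (MvPolynomial.pderiv i q) *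
      starRingEnd ℂ (MvPolynomial.aeval v q)).im ≤ 0} :=
    isClosed_le (Complex.continuous_im.comp ((continuous_mvPolynomial_aeval _).mul
      (Complex.continuous_conj.comp (continuous_mvPolynomial_aeval _)))) continuous_const
  refine closure_minimal (fun v hv ↦ ?_) closed (mem_closure_setOf_forall_im_pos hw)
  have := im_eval_derivative_mul_conj_eval_nonpos (hq.eval_coordLine_ne_zero hv i)
    Complex.zero_im.ge
  simpa only [Set.mem_ofPred_eq, derivative_coordLine, MvPolynomial.pderiv_map,
    eval_coordLine_map_algebraMap, Pi.single_zero, add_zero] using this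

theorem norm_aeval_le_norm_aeval_add_single (hq : RealStable q) (hw : ∀ k, 0 ≤ (w k).im)
    (i : Fin n) {t : ℝ} (ht : 0 ≤ t) :
    ‖MvPolynomial.aeval w q‖ ≤ ‖MvPolynomial.aeval (w + Pi.single i (t * Complex.I)) q‖ := by
  have closed : IsClosed {v : Fin n → ℂ | ‖MvPolynomial.aeval v q‖ ≤
      ‖MvPolynomial.aeval (v + Pi.single i (t * Complex.I)) q‖} :=
    isClosed_le (continuous_mvPolynomial_aeval q).norm
      ((continuous_mvPolynomial_aeval q).comp (continuous_add_const _)).norm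
  refine closure_minimal (fun v hv ↦ ?_) closed (mem_closure_setOf_forall_im_pos hw)
  have := norm_eval_le_norm_eval_add_mul_I (hq.eval_coordLine_ne_zero hv i) Complex.zero_im.ge ht
  simpa only [Set.mem_ofPred_eq, eval_coordLine_map_algebraMap, Pi.single_zero, add_zero,
    zero_add] using this

-- By monotonicity of `‖q‖` along vertical rays, one zero above the real line would force a whole
-- segment of zeros.
theorem aeval_add_single_ne_zero (hq : RealStable q) {z : Fin n → ℝ}
    (hz : MvPolynomial.eval z q ≠ 0) (i : Fin n) {s : ℂ} (hs : 0 < s.im) :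
    MvPolynomial.aeval (algebraMap ℝ ℂ ∘ z + Pi.single i s) q ≠ 0 := by
  intro hzero
  set p := coordLine (q.map (algebraMap ℝ ℂ)) (algebraMap ℝ ℂ ∘ z) i with hp
  have eval_segment (y : ℝ) (hy : y ∈ Set.Ioo 0 s.im) : p.eval ⟨s.re, y⟩ = 0 := by
    have im_nonneg (k : Fin n) :
        0 ≤ ((algebraMap ℝ ℂ ∘ z + Pi.single i (⟨s.re, y⟩ : ℂ) : Fin n → ℂ) k).im := by
      rcases eq_or_ne k i with rfl | hk
      · simpa using hy.1.le
      · simp [hk]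
    have le := hq.norm_aeval_le_norm_aeval_add_single im_nonneg i (sub_nonneg.2 hy.2.le)
    have top : (⟨s.re, y⟩ : ℂ) + ((s.im - y : ℝ) : ℂ) * Complex.I = s := by
      apply Complex.ext <;> simp
    rw [add_assoc, ← Pi.single_add, top, hzero, norm_zero, norm_le_zero_iff] at le
    rw [hp, eval_coordLine_map_algebraMap, le]
  have infinite : (Complex.mk s.re '' Set.Ioo 0 s.im).Infinite :=
    (Set.Ioo_infinite hs).image fun x _ y _ hxy ↦ congrArg Complex.im hxy
  have p_eq_zero : p = 0 := p.eq_zero_of_infinite_isRoot <| infinite.mono <| by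
    rintro _ ⟨y, hy, rfl⟩
    exact eval_segment y hy
  apply hz
  have := eval_coordLine_map_algebraMap q (algebraMap ℝ ℂ ∘ z) i 0
  rw [← hp, p_eq_zero, eval_zero, Pi.single_zero, add_zero,
    MvPolynomial.aeval_algebraMap_apply] at this
  exact (map_eq_zero _).1 this.symm

end RealStable

section Residues

variable {K R : ℝ[X]}

theorem eval_mul_eval_mul_im_conj_pow_nonpos {a : ℝ} {k : ℕ}
    (h : ∀ u : ℂ, 0 < u.im →
      (aeval u K * starRingEnd ℂ (aeval u ((X - C a) ^ k * R))).im ≤ 0)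
    {w : ℂ} (hw : 0 < w.im) : K.eval a * R.eval a * (starRingEnd ℂ (w ^ k)).im ≤ 0 := by
  have near (ε : ℝ) (hε : 0 < ε) : (starRingEnd ℂ (w ^ k) *
      (aeval (a + ε * w : ℂ) K * starRingEnd ℂ (aeval (a + ε * w : ℂ) R))).im ≤ 0 := by
    have := h (a + ε * w) (by simpa using mul_pos hε hw)
    have factor : aeval (a + ε * w : ℂ) K *
        starRingEnd ℂ (aeval (a + ε * w : ℂ) ((X - C a) ^ k * R)) =
        ((ε ^ k : ℝ) : ℂ) * (starRingEnd ℂ (w ^ k) *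
          (aeval (a + ε * w : ℂ) K * starRingEnd ℂ (aeval (a + ε * w : ℂ) R))) := by
      simp only [map_mul, map_pow, map_sub, aeval_X, aeval_C, Complex.coe_algebraMap,
        add_sub_cancel_left, Complex.conj_ofReal, Complex.ofReal_pow, mul_pow]
      ring
    rw [factor, Complex.im_ofReal_mul] at this
    exact nonpos_of_mul_nonpos_right this (pow_pos hε k)
  have tendsto : Filter.Tendsto (fun ε : ℝ ↦ (starRingEnd ℂ (w ^ k) *
      (aeval (a + ε * w : ℂ) K * starRingEnd ℂ (aeval (a + ε * w : ℂ) R))).im)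
      (nhdsWithin 0 (Set.Ioi 0)) (nhds (K.eval a * R.eval a * (starRingEnd ℂ (w ^ k)).im)) := by
    refine Filter.Tendsto.mono_left ?_ nhdsWithin_le_nhds
    refine Continuous.tendsto' (by fun_prop) _ _ ?_
    have aeval_ofReal (p : ℝ[X]) : aeval (a : ℂ) p = p.eval a :=
      aeval_algebraMap_apply_eq_algebraMap_eval a p
    rw [Complex.ofReal_zero, zero_mul, add_zero, aeval_ofReal, aeval_ofReal, Complex.conj_ofReal,
      ← Complex.ofReal_mul, Complex.im_mul_ofReal, mul_comm]
  exact le_of_tendsto tendsto (Filter.eventually_of_mem self_mem_nhdsWithin near)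

theorem eval_mul_eval_nonneg {a : ℝ}
    (h : ∀ u : ℂ, 0 < u.im → (aeval u K * starRingEnd ℂ (aeval u ((X - C a) * R))).im ≤ 0) :
    0 ≤ K.eval a * R.eval a := by
  have := eval_mul_eval_mul_im_conj_pow_nonpos (k := 1) (w := Complex.I) (by simpa using h)
    (by simp)
  simpa using this

-- Near a zero of order `k ≥ 2` the phase of `(u - a) ^ k` sweeps more than a half turn as `u`
-- crosses the upper half plane, so both signs occur.
theorem eval_eq_zero_of_two_le {a : ℝ} {k : ℕ} (hk : 2 ≤ k) (hR : R.eval a ≠ 0)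
    (h : ∀ u : ℂ, 0 < u.im →
      (aeval u K * starRingEnd ℂ (aeval u ((X - C a) ^ k * R))).im ≤ 0) :
    K.eval a = 0 := by
  have k_pos : (0 : ℝ) < k := by positivity
  have two_le : (2 : ℝ) ≤ k := by exact_mod_cast hk
  have phase (θ : ℝ) (h0 : 0 < θ) (hπ : θ < Real.pi) :
      K.eval a * R.eval a * Real.sin (k * θ) ≥ 0 := by
    have := eval_mul_eval_mul_im_conj_pow_nonpos h (w := Complex.exp (θ * Complex.I))
      (by rw [Complex.exp_ofReal_mul_I_im]; exact Real.sin_pos_of_pos_of_lt_pi h0 hπ)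
    rw [← Complex.exp_nat_mul, Complex.conj_im, ← mul_assoc, ← Complex.ofReal_natCast,
      ← Complex.ofReal_mul, Complex.exp_ofReal_mul_I_im] at this
    linarith
  have nonneg : 0 ≤ K.eval a * R.eval a := by
    have := phase (Real.pi / (2 * k)) (by positivity)
      (by rw [div_lt_iff₀ (by positivity)]; nlinarith [Real.pi_pos])
    rw [show k * (Real.pi / (2 * k)) = Real.pi / 2 by field_simp, Real.sin_pi_div_two] at this
    linarith
  have nonpos : K.eval a * R.eval a ≤ 0 := by
    have := phase (3 * Real.pi / (2 * k)) (by positivity)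
      (by rw [div_lt_iff₀ (by positivity)]; nlinarith [Real.pi_pos])
    rw [show k * (3 * Real.pi / (2 * k)) = Real.pi / 2 + Real.pi by field_simp; ring,
      Real.sin_add_pi, Real.sin_pi_div_two] at this
    linarith
  exact (mul_eq_zero.1 (nonpos.antisymm nonneg)).resolve_right hR

theorem eval_eq_zero_of_sq_dvd {P : ℝ[X]} {a : ℝ} (hP : P ≠ 0) (ha : (X - C a) ^ 2 ∣ P)
    (h : ∀ u : ℂ, 0 < u.im → (aeval u K * starRingEnd ℂ (aeval u P)).im ≤ 0) :
    K.eval a = 0 := by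
  obtain ⟨R, hPR, hR⟩ := exists_eq_pow_rootMultiplicity_mul_and_not_dvd P hP a
  rw [dvd_iff_isRoot] at hR
  exact eval_eq_zero_of_two_le ((le_rootMultiplicity_iff hP).2 ha) hR (hPR ▸ h)

end Residues

section PartialFractions

/-- The convex cone of real polynomials `K` with `K / ∏ (X - r) = ∑ cᵣ / (X - r)` and all `cᵣ ≥ 0`,
where `r` runs over the multiset `m`. -/
noncomputable def interlacingCone (m : Multiset ℝ) : Submodule NNReal ℝ[X] :=
  Submodule.span NNReal {p | ∃ r ∈ m, ((m.erase r).map (X - C ·)).prod = p}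

theorem prod_erase_mem_interlacingCone {m : Multiset ℝ} {r : ℝ} (hr : r ∈ m) :
    ((m.erase r).map (X - C ·)).prod ∈ interlacingCone m :=
  Submodule.subset_span ⟨r, hr, rfl⟩

theorem X_sub_C_mul_mem_interlacingCone_cons {m : Multiset ℝ} {K : ℝ[X]} (a : ℝ)
    (hK : K ∈ interlacingCone m) : (X - C a) * K ∈ interlacingCone (a ::ₘ m) := by
  suffices h : interlacingCone m ≤
      (interlacingCone (a ::ₘ m)).comap (LinearMap.mulLeft NNReal (X - C a)) from h hK
  refine Submodule.span_le.2 ?_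
  rintro _ ⟨r, hr, rfl⟩
  have := prod_erase_mem_interlacingCone (Multiset.mem_cons_of_mem (b := a) hr)
  rwa [Multiset.erase_cons_tail_of_mem hr, Multiset.map_cons, Multiset.prod_cons] at this

theorem mem_interlacingCone_val {K : ℝ[X]} (s : Finset ℝ) (hdeg : K.degree < s.card)
    (h : ∀ u : ℂ, 0 < u.im →
      (aeval u K * starRingEnd ℂ (aeval u (∏ r ∈ s, (X - C r)))).im ≤ 0) :
    K ∈ interlacingCone s.val := by
  rw [Lagrange.eq_interpolate (v := id) Function.injective_id.injOn hdeg,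
    Lagrange.interpolate_eq_sum]
  refine Submodule.sum_mem _ fun r hr ↦ ?_
  have nonneg : 0 ≤ K.eval r * (∏ j ∈ s.erase r, (X - C j)).eval r :=
    eval_mul_eval_nonneg (by rwa [Finset.mul_prod_erase s (fun j ↦ X - C j) hr])
  simp only [eval_prod, eval_sub, eval_X, eval_C] at nonneg
  have residue_nonneg : 0 ≤ K.eval r / ∏ j ∈ s.erase r, (r - j) :=
    div_nonneg_iff.2 (mul_nonneg_iff.1 nonneg)
  rw [← smul_eq_C_mul]
  exact Submodule.smul_mem _ (⟨_, residue_nonneg⟩ : NNReal) (prod_erase_mem_interlacingCone hr)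

theorem mem_interlacingCone {m : Multiset ℝ} {K : ℝ[X]} (hdeg : K.degree < m.card)
    (h : ∀ u : ℂ, 0 < u.im →
      (aeval u K * starRingEnd ℂ (aeval u (m.map (X - C ·)).prod)).im ≤ 0) :
    K ∈ interlacingCone m := by
  induction m using Multiset.strongInductionOn generalizing K with
  | ih m ih =>
  by_cases hm : m.Nodup
  · exact mem_interlacingCone_val ⟨m, hm⟩ hdeg h
  simp only [Multiset.nodup_iff_ne_cons_cons, not_forall, not_not] at hm
  obtain ⟨a, t, rfl⟩ := hm
  set P := ((a ::ₘ a ::ₘ t).map (X - C ·)).prod with hP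
  have P_eq : P = (X - C a) * ((a ::ₘ t).map (X - C ·)).prod := by
    rw [hP, Multiset.map_cons, Multiset.prod_cons]
  have P_monic : P.Monic := monic_multisetProd_X_sub_C _
  have sq_dvd : (X - C a) ^ 2 ∣ P := by
    rw [P_eq, Multiset.map_cons, Multiset.prod_cons, ← mul_assoc, sq]
    exact dvd_mul_right _ _
  obtain ⟨K₁, rfl⟩ := dvd_iff_isRoot.2 (eval_eq_zero_of_sq_dvd P_monic.ne_zero sq_dvd h)
  refine X_sub_C_mul_mem_interlacingCone_cons a (ih _ (Multiset.lt_cons_self _ _) ?_ fun u hu ↦ ?_)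
  · rw [degree_mul, degree_X_sub_C, Multiset.card_cons, Nat.cast_succ, add_comm] at hdeg
    exact lt_of_add_lt_add_right hdeg
  · have := h u hu
    rw [P_eq, map_mul, map_mul, map_mul, mul_mul_mul_comm, Complex.mul_conj,
      Complex.im_ofReal_mul] at this
    refine nonpos_of_mul_nonpos_right this (Complex.normSq_pos.2 fun hu0 ↦ hu.ne' ?_)
    simpa using congrArg Complex.im hu0

end PartialFractions

section NewtonInequality

variable {R : Type*} [CommRing R]

theorem two_mul_esymm_two (m : Multiset R) :
    2 * m.esymm 2 = m.sum ^ 2 - (m.map (· ^ 2)).sum := by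
  induction m using Multiset.induction_on with
  | empty => simp [Multiset.esymm, Multiset.powersetCard_zero_right]
  | cons a m ih =>
    have esymm_cons : (a ::ₘ m).esymm 2 = m.esymm 2 + a * m.sum := by
      have := Multiset.sum_map_mul_left (s := m) (a := a) (f := id)
      simpa [Multiset.esymm, Multiset.powersetCard_cons, Multiset.powersetCard_one] using this
    rw [esymm_cons, mul_add, ih, Multiset.sum_cons, Multiset.map_cons, Multiset.sum_cons]
    ring

variable [LinearOrder R] [IsStrictOrderedRing R]

theorem sq_multiset_sum_le_card_mul_sum_sq (m : Multiset R) :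
    m.sum ^ 2 ≤ m.card * (m.map (· ^ 2)).sum := by
  have sum_sq : ∑ x ∈ m.toEnumFinset, x.1 ^ 2 = (m.map (· ^ 2)).sum := by
    conv_rhs => rw [← m.map_toEnumFinset_fst, Multiset.map_map]
    rfl
  rw [← sum_sq, Multiset.sum_eq_sum_toEnumFinset, ← Multiset.card_toEnumFinset]
  exact sq_sum_le_card_mul_sum_sq

theorem two_mul_card_mul_esymm_two_le (m : Multiset R) :
    2 * m.card * m.esymm 2 ≤ (m.card - 1) * m.sum ^ 2 := by
  calc 2 * m.card * m.esymm 2 = m.card * (m.sum ^ 2 - (m.map (· ^ 2)).sum) := by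
        rw [← two_mul_esymm_two]; ring
    _ ≤ (m.card - 1) * m.sum ^ 2 := by linarith [sq_multiset_sum_le_card_mul_sum_sq m]

theorem two_mul_coeff_prod_X_sub_C_le {m : Multiset R} {d : ℕ} (hm : m.card = d + 2) :
    2 * (d + 2) * (m.map (X - C ·)).prod.coeff d ≤ (d + 1) * m.sum ^ 2 := by
  have newton := two_mul_card_mul_esymm_two_le m
  rw [Multiset.prod_X_sub_C_coeff m (by omega), hm, Nat.add_sub_cancel_left]
  rw [hm] at newton
  push_cast at newton
  linarith

theorem coeff_add_coeff_nonpos_of_mem_interlacingCone {m : Multiset ℝ} {d : ℕ} (hm : m.card = d + 3)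
    (nonneg : ∀ r ∈ m, 0 ≤ r) {K : ℝ[X]} (hK : K ∈ interlacingCone m) :
    2 * (d + 2) * K.coeff d + (d + 1) * m.sum * K.coeff (d + 1) ≤ 0 := by
  induction hK using Submodule.span_induction with
  | zero => simp
  | add p q _ _ hp hq =>
    simp only [coeff_add]
    linarith
  | smul c p _ hp =>
    have := mul_nonpos_of_nonneg_of_nonpos c.coe_nonneg hp
    simp only [coeff_smul, NNReal.smul_def, smul_eq_mul]
    linarith
  | mem p hp =>
    obtain ⟨r, hr, rfl⟩ := hp
    have card_erase : (m.erase r).card = d + 2 := by rw [Multiset.card_erase_of_mem hr, hm]; rfl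
    have newton := two_mul_coeff_prod_X_sub_C_le card_erase
    have coeff_pred : ((m.erase r).map (X - C ·)).prod.coeff (d + 1) = -(m.erase r).sum := by
      have := multiset_prod_X_sub_C_coeff_card_pred (m.erase r) (by omega)
      rwa [card_erase] at this
    have erase_sum_nonneg : 0 ≤ (m.erase r).sum :=
      Multiset.sum_nonneg fun x hx ↦ nonneg x (Multiset.mem_of_mem_erase hx)
    have dropped_nonneg : 0 ≤ (d + 1) * (r * (m.erase r).sum) :=
      mul_nonneg (by positivity) (mul_nonneg (nonneg r hr) erase_sum_nonneg)
    rw [coeff_pred, ← Multiset.sum_erase hr]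
    linarith

end NewtonInequality

section Inversion

/-- The polynomial `u ^ d * p (-1 / u)` in `u`, for `p` of degree at most `d`. As `u ↦ -1 / u`
preserves the upper half plane, it moves the base point `0` of a stable `p` to infinity. -/
noncomputable def negReflect {R : Type*} [Ring R] (d : ℕ) (p : R[X]) : R[X] :=
  (p.comp (C (-1) * X)).reflect d

section Ring

variable {R : Type*} [Ring R]

theorem natDegree_comp_C_mul_X_le (p : R[X]) (a : R) :
    (p.comp (C a * X)).natDegree ≤ p.natDegree :=
  natDegree_le_iff_coeff_eq_zero.2 fun k hk ↦ by
    rw [comp_C_mul_X_coeff, coeff_eq_zero_of_natDegree_lt hk, zero_mul]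

theorem coeff_negReflect {d k : ℕ} (p : R[X]) (hk : k ≤ d) :
    (negReflect d p).coeff k = p.coeff (d - k) * (-1) ^ (d - k) := by
  rw [negReflect, coeff_reflect, revAt_le hk, comp_C_mul_X_coeff]

theorem natDegree_negReflect_le {d : ℕ} {p : R[X]} (hp : p.natDegree ≤ d) :
    (negReflect d p).natDegree ≤ d :=
  natDegree_reflect_le.trans (max_le le_rfl ((natDegree_comp_C_mul_X_le p _).trans hp))

end Ring

theorem aeval_negReflect {F E : Type*} [Field F] [Field E] [Algebra F E] {d : ℕ} {p : F[X]}
    (hp : p.natDegree ≤ d) {u : E} (hu : u ≠ 0) :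
    aeval u (negReflect d p) = u ^ d * aeval (-u⁻¹) p := by
  have := invertibleOfNonzero (inv_ne_zero hu)
  have reflect_eq := eval₂_reflect_mul_pow (algebraMap F E) u⁻¹ d (p.comp (C (-1) * X))
    ((natDegree_comp_C_mul_X_le p _).trans hp)
  rw [invOf_eq_inv, inv_inv, ← aeval_def, ← aeval_def, aeval_comp, map_mul, aeval_C, aeval_X,
    map_neg (algebraMap F E), map_one, neg_one_mul] at reflect_eq
  rw [negReflect, ← reflect_eq, mul_left_comm, ← mul_pow, mul_inv_cancel₀ hu, one_pow, mul_one]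

theorem im_neg_inv_pos {u : ℂ} (hu : 0 < u.im) : 0 < (-u⁻¹).im := by
  rw [Complex.neg_im, Complex.inv_im, neg_div, neg_neg]
  exact div_pos hu (Complex.normSq_pos.2 fun h ↦ hu.ne' (by rw [h, Complex.zero_im]))

theorem splits_of_aeval_ne_zero {p : ℝ[X]} (h : ∀ s : ℂ, 0 < s.im → aeval s p ≠ 0) : p.Splits := by
  refine Splits.of_splits_map (algebraMap ℝ ℂ) (IsAlgClosed.splits _) fun s hs ↦ ?_
  have hs0 : aeval s p = 0 := by
    rw [← eval_map_algebraMap]; exact isRoot_of_mem_roots hs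
  have hs_conj : aeval (starRingEnd ℂ s) p = 0 := by rw [aeval_conj, hs0, map_zero]
  refine ⟨s.re, Complex.ext rfl ?_⟩
  rcases lt_trichotomy s.im 0 with hneg | hzero | hpos
  · exact absurd hs_conj (h _ (by simpa using hneg))
  · exact hzero.symm
  · exact absurd hs0 (h s hpos)

theorem exists_negReflect_eq_C_mul_prod {f : ℝ[X]} {d : ℕ} (hf : f.natDegree ≤ d)
    (hstable : ∀ s : ℂ, 0 < s.im → aeval s f ≠ 0) (hray : ∀ s : ℝ, 0 ≤ s → f.eval s ≠ 0) :
    ∃ m : Multiset ℝ, m.card = d ∧ (∀ r ∈ m, 0 ≤ r) ∧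
      negReflect d f = C (f.coeff 0) * (m.map (X - C ·)).prod := by
  have coeff_top : (negReflect d f).coeff d = f.coeff 0 := by
    rw [coeff_negReflect f le_rfl, Nat.sub_self, pow_zero, mul_one]
  have coeff_zero_ne : f.coeff 0 ≠ 0 := coeff_zero_eq_eval_zero f ▸ hray 0 le_rfl
  have natDegree_eq : (negReflect d f).natDegree = d :=
    (natDegree_negReflect_le hf).antisymm (le_natDegree_of_ne_zero (coeff_top ▸ coeff_zero_ne))
  have splits : (negReflect d f).Splits := splits_of_aeval_ne_zero fun u hu ↦ by
    have hu0 : u ≠ 0 := fun h ↦ hu.ne' (by rw [h, Complex.zero_im])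
    rw [aeval_negReflect hf hu0]
    exact mul_ne_zero (pow_ne_zero _ hu0) (hstable _ (im_neg_inv_pos hu))
  refine ⟨(negReflect d f).roots, ?_, fun r hr ↦ ?_, ?_⟩
  · rw [← splits.natDegree_eq_card_roots, natDegree_eq]
  · by_contra! hneg
    have root : aeval r (negReflect d f) = 0 := isRoot_of_mem_roots hr
    rw [aeval_negReflect hf hneg.ne] at root
    exact hray (-r⁻¹) (by simpa using hneg.le)
      ((mul_eq_zero.1 root).resolve_left (pow_ne_zero _ hneg.ne))
  · conv_lhs => rw [splits.eq_prod_roots, leadingCoeff, natDegree_eq, coeff_top]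

theorem coeff_one_eq_coeff_zero_mul_sum {R : Type*} [CommRing R] {f : R[X]} {m : Multiset R}
    (hm : 0 < m.card) (h : negReflect m.card f = C (f.coeff 0) * (m.map (X - C ·)).prod) :
    f.coeff 1 = f.coeff 0 * m.sum := by
  have coeff_pred := congrArg (coeff · (m.card - 1)) h
  rw [coeff_C_mul, multiset_prod_X_sub_C_coeff_card_pred m hm,
    coeff_negReflect f (Nat.sub_le _ _), Nat.sub_sub_self hm, pow_one, mul_neg_one, mul_neg]
    at coeff_pred
  exact neg_inj.1 coeff_pred

theorem im_aeval_negReflect_mul_conj_nonpos {f h : ℝ[X]} {d : ℕ} (hf : f.natDegree ≤ d)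
    (hh : h.natDegree ≤ d)
    (him : ∀ s : ℂ, 0 < s.im → (aeval s h * starRingEnd ℂ (aeval s f)).im ≤ 0) {u : ℂ}
    (hu : 0 < u.im) :
    (aeval u (negReflect d h) * starRingEnd ℂ (aeval u (negReflect d f))).im ≤ 0 := by
  have hu0 : u ≠ 0 := fun h ↦ hu.ne' (by rw [h, Complex.zero_im])
  rw [aeval_negReflect hf hu0, aeval_negReflect hh hu0, map_mul, mul_mul_mul_comm,
    Complex.mul_conj, Complex.im_ofReal_mul]
  exact mul_nonpos_of_nonneg_of_nonpos (Complex.normSq_nonneg _)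
    (him _ (im_neg_inv_pos hu))

theorem degree_negReflect_lt {R : Type*} [Ring R] {h : R[X]} {d : ℕ} (hh : h.natDegree ≤ d)
    (h0 : h.coeff 0 = 0) : (negReflect d h).degree < d := by
  rw [degree_lt_iff_coeff_zero]
  intro k hk
  rcases hk.eq_or_lt with rfl | hk
  · rw [coeff_negReflect h le_rfl, Nat.sub_self, h0, zero_mul]
  · exact coeff_eq_zero_of_natDegree_lt ((natDegree_negReflect_le hh).trans_lt hk)

section Estimate

variable {f : ℝ[X]} {d : ℕ}

theorem mul_coeff_two_le_mul_coeff_three_of_coeff_zero_eq_zero {h : ℝ[X]} (hf : f.natDegree ≤ d + 3)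
    (hh : h.natDegree ≤ d + 3) (hstable : ∀ s : ℂ, 0 < s.im → aeval s f ≠ 0)
    (hray : ∀ s : ℝ, 0 ≤ s → f.eval s ≠ 0) (h0 : h.coeff 0 = 0)
    (him : ∀ s : ℂ, 0 < s.im → (aeval s h * starRingEnd ℂ (aeval s f)).im ≤ 0) :
    (d + 1) * (f.coeff 1 / f.coeff 0) * (f.coeff 0 * h.coeff 2) ≤
      2 * (d + 2) * (f.coeff 0 * h.coeff 3) := by
  obtain ⟨m, hcard, hroots, factor⟩ := exists_negReflect_eq_C_mul_prod hf hstable hray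
  have sum_eq : m.sum = f.coeff 1 / f.coeff 0 := by
    rw [coeff_one_eq_coeff_zero_mul_sum (by omega) (hcard ▸ factor), mul_div_cancel_left₀]
    exact coeff_zero_eq_eval_zero f ▸ hray 0 le_rfl
  have mem_cone : C (f.coeff 0) * negReflect (d + 3) h ∈ interlacingCone m := by
    refine mem_interlacingCone ?_ fun u hu ↦ ?_
    · rw [hcard, ← smul_eq_C_mul]
      exact (degree_smul_le _ _).trans_lt (degree_negReflect_lt hh h0)
    · have := im_aeval_negReflect_mul_conj_nonpos hf hh him hu
      rwa [factor, map_mul, aeval_C, Complex.coe_algebraMap, map_mul (starRingEnd ℂ),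
        Complex.conj_ofReal, mul_left_comm, ← mul_assoc, ← Complex.coe_algebraMap, ← aeval_C u,
        ← map_mul] at this
  have functional := coeff_add_coeff_nonpos_of_mem_interlacingCone hcard hroots mem_cone
  rw [coeff_C_mul, coeff_C_mul, coeff_negReflect h (by omega), coeff_negReflect h (by omega),
    Nat.add_sub_cancel_left, show d + 3 - (d + 1) = 2 by omega, sum_eq] at functional
  linarith

theorem mul_coeff_two_le_mul_coeff_three {g : ℝ[X]} (hf : f.natDegree ≤ d + 3)
    (hg : g.natDegree ≤ d + 3) (hstable : ∀ s : ℂ, 0 < s.im → aeval s f ≠ 0)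
    (hray : ∀ s : ℝ, 0 ≤ s → f.eval s ≠ 0)
    (him : ∀ s : ℂ, 0 < s.im → (aeval s g * starRingEnd ℂ (aeval s f)).im ≤ 0) :
    (d + 1) * (f.coeff 1 / f.coeff 0) * (f.coeff 0 * g.coeff 2 - g.coeff 0 * f.coeff 2) ≤
      2 * (d + 2) * (f.coeff 0 * g.coeff 3 - g.coeff 0 * f.coeff 3) := by
  have hf0 : f.coeff 0 ≠ 0 := coeff_zero_eq_eval_zero f ▸ hray 0 le_rfl
  have coeff_h (k : ℕ) : f.coeff 0 * (g - C (g.coeff 0 / f.coeff 0) * f).coeff k =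
      f.coeff 0 * g.coeff k - g.coeff 0 * f.coeff k := by
    rw [coeff_sub, coeff_C_mul]
    field_simp
  have key := mul_coeff_two_le_mul_coeff_three_of_coeff_zero_eq_zero
    (h := g - C (g.coeff 0 / f.coeff 0) * f) hf
    ((natDegree_sub_le _ _).trans (max_le hg ((natDegree_C_mul_le _ _).trans hf))) hstable hray
    ?_ ?_
  · rwa [coeff_h, coeff_h] at key
  · rw [coeff_sub, coeff_C_mul, div_mul_cancel₀ _ hf0, sub_self]
  · intro s hs
    have : (aeval s (g - C (g.coeff 0 / f.coeff 0) * f) * starRingEnd ℂ (aeval s f)).im =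
        (aeval s g * starRingEnd ℂ (aeval s f)).im := by
      rw [map_sub, map_mul, aeval_C, sub_mul, mul_assoc, Complex.mul_conj, Complex.sub_im,
        Complex.coe_algebraMap, Complex.im_ofReal_mul, Complex.ofReal_im, mul_zero, sub_zero]
    exact this.trans_le (him s hs)

end Estimate

end Inversion

theorem Phi_eq_coeff_coordLine_div {n : ℕ} (q : MvPolynomial (Fin n) ℝ) (i : Fin n)
    (z : Fin n → ℝ) :
    Phi q i z = (coordLine q z i).coeff 1 / (coordLine q z i).coeff 0 := by
  have coeff_one := factorial_mul_coeff_coordLine q z i 1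
  rw [Nat.factorial_one, Nat.cast_one, one_mul] at coeff_one
  rw [coeff_one, coeff_zero_coordLine]
  rfl

namespace RealStable

variable {n : ℕ} {q : MvPolynomial (Fin n) ℝ}

theorem im_aeval_coordLine_mul_conj_nonpos (hq : RealStable q) (z : Fin n → ℝ) (i j : Fin n)
    {s : ℂ} (hs : 0 < s.im) :
    (aeval s (coordLine (MvPolynomial.pderiv j q) z i) *
      starRingEnd ℂ (aeval s (coordLine q z i))).im ≤ 0 := by
  rw [aeval_coordLine, aeval_coordLine]
  refine hq.im_aeval_pderiv_mul_conj_aeval_nonpos (fun k ↦ ?_) j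
  rcases eq_or_ne k i with rfl | hk
  · simpa using hs.le
  · simp [hk]

theorem mul_coeff_coordLine_two_le (hq : RealStable q) {i : Fin n} {d : ℕ}
    (hdeg : q.degreeOf i ≤ d + 3) {z : Fin n → ℝ}
    (hz : ∀ s : ℝ, 0 ≤ s → MvPolynomial.eval (z + Pi.single i s) q ≠ 0) (j : Fin n) :
    (d + 1) * Phi q i z *
        ((coordLine q z i).coeff 0 * (coordLine (MvPolynomial.pderiv j q) z i).coeff 2 -
          (coordLine (MvPolynomial.pderiv j q) z i).coeff 0 * (coordLine q z i).coeff 2) ≤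
      2 * (d + 2) *
        ((coordLine q z i).coeff 0 * (coordLine (MvPolynomial.pderiv j q) z i).coeff 3 -
          (coordLine (MvPolynomial.pderiv j q) z i).coeff 0 * (coordLine q z i).coeff 3) := by
  have eval_ne : MvPolynomial.eval z q ≠ 0 := by simpa using hz 0 le_rfl
  rw [Phi_eq_coeff_coordLine_div]
  refine mul_coeff_two_le_mul_coeff_three ((natDegree_coordLine_le q z i).trans hdeg)
    ((natDegree_coordLine_le _ z i).trans ((degreeOf_pderiv_le_s17 i j q).trans hdeg))
    (fun s hs ↦ ?_) (fun s hs ↦ ?_) fun s hs ↦ hq.im_aeval_coordLine_mul_conj_nonpos z i j hs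
  · rw [aeval_coordLine]
    exact hq.aeval_add_single_ne_zero eval_ne i hs
  · rw [← coe_aeval_eq_eval, aeval_coordLine]
    exact hz s hs

end RealStable

theorem barrier_estimate_deg_three_general {n : ℕ} (q : MvPolynomial (Fin n) ℝ)
    (hq : RealStable q) (i : Fin n) {d : ℕ} (hd : 3 ≤ d) (hdeg : MvPolynomial.degreeOf i q ≤ d)
    (z : Fin n → ℝ) (hz : ∀ s : ℝ, 0 ≤ s → MvPolynomial.eval (z + Pi.single i s) q ≠ 0)
    (hΦ : 0 < Phi q i z) (j : Fin n) :
    MvPolynomial.eval z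
        (q * MvPolynomial.pderiv j (MvPolynomial.pderiv i (MvPolynomial.pderiv i q))
          - MvPolynomial.pderiv j q * MvPolynomial.pderiv i (MvPolynomial.pderiv i q))
      ≤ 2 * (d - 1) / (3 * (d - 2) * Phi q i z) *
        MvPolynomial.eval z
          (q * MvPolynomial.pderiv j
              (MvPolynomial.pderiv i (MvPolynomial.pderiv i (MvPolynomial.pderiv i q)))
            - MvPolynomial.pderiv j q *
              MvPolynomial.pderiv i (MvPolynomial.pderiv i (MvPolynomial.pderiv i q))) := by
  obtain ⟨d, rfl⟩ := Nat.exists_eq_add_of_le' hd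
  have estimate := hq.mul_coeff_coordLine_two_le hdeg hz j
  have second := eval_mul_pderiv_iterate_pderiv_sub q z i j 2
  have third := eval_mul_pderiv_iterate_pderiv_sub q z i j 3
  simp only [Function.iterate_succ_apply, Function.iterate_zero_apply] at second third
  rw [second, third, div_mul_eq_mul_div, le_div_iff₀ ?_]
  · push_cast [Nat.factorial]
    linarith
  · have : (0 : ℝ) ≤ d := d.cast_nonneg
    exact mul_pos (mul_pos three_pos (by push_cast; linarith)) hΦ

/-- Degree-3 barrier estimate: if `q` is real stable of degree at most 3 in `zᵢ`, `z` is
above the roots of `q` and `Φ_q^i(z) > 0`, then with `δ = 4/(3Φ_q^i(z))`, for every `j`: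
`(q ∂_j∂_i²q - (∂_j q)(∂_i²q))(z) ≤ δ (q ∂_j∂_i³q - (∂_j q)(∂_i³q))(z)`. -/
theorem barrier_estimate_deg_three {n : ℕ} (q : MvPolynomial (Fin n) ℝ) (hq : RealStable q)
    (i : Fin n) (hdeg : MvPolynomial.degreeOf i q ≤ 3)
    (z : Fin n → ℝ) (hz : AboveRoots q z) (hΦ : 0 < Phi q i z) :
    ∀ j : Fin n,
      MvPolynomial.eval z
          (q * MvPolynomial.pderiv j (MvPolynomial.pderiv i (MvPolynomial.pderiv i q))
            - MvPolynomial.pderiv j q * MvPolynomial.pderiv i (MvPolynomial.pderiv i q))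
        ≤ (4 / (3 * Phi q i z)) *
          MvPolynomial.eval z
            (q * MvPolynomial.pderiv j
                (MvPolynomial.pderiv i (MvPolynomial.pderiv i (MvPolynomial.pderiv i q)))
              - MvPolynomial.pderiv j q *
                MvPolynomial.pderiv i (MvPolynomial.pderiv i (MvPolynomial.pderiv i q))) := by
  intro j
  have ray_ne_zero (s : ℝ) (hs : 0 ≤ s) : MvPolynomial.eval (z + Pi.single i s) q ≠ 0 :=
    hz _ (Pi.single_nonneg.2 hs : (0 : Fin n → ℝ) ≤ Pi.single i s)
  convert barrier_estimate_deg_three_general q hq i le_rfl hdeg z ray_ne_zero hΦ j using 2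
  norm_num
end

section
/- Let A be an n×n complex Hermitian matrix, let p(z₁,…,z_n) = det(Z − A)² where Z = diag(z₁,…,z_n), and let z ∈ ℝ^n be such that Z − A (with Z = diag(z)) is invertible; set B := (Z − A)^{-1}. Then for every k ≥ 0 and every function f : {1,…,k} → {1,…,n}, (∂_{z_{f(1)}} ∂_{z_{f(2)}} ⋯ ∂_{z_{f(k)}} p)(z) = p(z) · det₂(M), where M is the k×k matrix with entries M_{s,t} = B_{f(s),f(t)}. -/
open Polynomial Matrix

/-- The formal partial derivative `∂/∂zᵢ` as a linear endomorphism of `ℂ[z₁,…,z_n]`. -/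
noncomputable def pd {n : ℕ} (i : Fin n) :
    MvPolynomial (Fin n) ℂ →ₗ[ℂ] MvPolynomial (Fin n) ℂ :=
  (MvPolynomial.pderiv i).toLinearMap

/-- The matrix `Z - A`, where `Z = diag(z₁,…,z_n)` is the diagonal matrix of indeterminates. -/
noncomputable def ZsubA {n : ℕ} (A : Matrix (Fin n) (Fin n) ℂ) :
    Matrix (Fin n) (Fin n) (MvPolynomial (Fin n) ℂ) :=
  Matrix.of fun i j => (if i = j then MvPolynomial.X i else 0) - MvPolynomial.C (A i j)

/-!
Let `W = Z - A`, `B = W⁻¹` and `q = det W`. Since `∂ᵢW` is the matrix unit `Eᵢᵢ`, Jacobi's formula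
and the derivative of an inverse give `∂ᵢ q = q Bᵢᵢ` and `∂ᵢ B_{ab} = -B_{ai} B_{ib}`. By the
Leibniz rule, `∂ᵢ (q ^ r det_r M)` is then `q ^ r` times `r Bᵢᵢ det_r M` plus a sum over the rows of
`M`, and this is exactly the expansion of the `r`-determinant of `M` bordered by the index `i`,
according to how a permutation treats the new index. Induction on the number of derivatives
concludes, for every `r`.

The entries of `B` are not polynomials. They become power series after Taylor expansion at `z`,
which commutes with the derivatives and turns evaluation at `z` into the constant coefficient.
-/

section CycleCount

variable {ι : Type*} [Fintype ι] [DecidableEq ι] {σ τ : Equiv.Perm ι}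

theorem cycleCount_mul_add_card_of_disjoint (h : σ.Disjoint τ) :
    cycleCount (σ * τ) + Fintype.card ι = cycleCount σ + cycleCount τ := by
  have hστ : (σ * τ).support.card ≤ Fintype.card ι := Finset.card_le_univ _
  rw [h.card_support_mul] at hστ
  simp only [cycleCount, h.cycleType_mul, h.card_support_mul, Multiset.card_add]
  omega

theorem cycleCount_add_card_support_of_isCycle (h : σ.IsCycle) :
    cycleCount σ + σ.support.card = Fintype.card ι + 1 := by
  have hσ : σ.support.card ≤ Fintype.card ι := Finset.card_le_univ _
  simp only [cycleCount, h.cycleType, Multiset.card_singleton]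
  omega

theorem cycleCount_swap_mul_of_isCycle (h : σ.IsCycle) {x : ι} (hx : σ x ≠ x) :
    cycleCount (Equiv.swap x (σ x) * σ) = cycleCount σ + 1 := by
  have hσ := cycleCount_add_card_support_of_isCycle h
  by_cases hxx : σ (σ x) = x
  · have hswap : σ = Equiv.swap x (σ x) := h.eq_swap_of_apply_apply_eq_self hx hxx
    have hcard : σ.support.card = 2 := by
      rw [hswap, Equiv.Perm.card_support_swap hx.symm]
    have hone : Equiv.swap x (σ x) * σ = 1 := by
      nth_rw 2 [hswap]
      exact Equiv.swap_mul_self _ _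
    have hcount : cycleCount (1 : Equiv.Perm ι) = Fintype.card ι := by simp [cycleCount]
    rw [hone, hcount]
    omega
  · have hsupp : (Equiv.swap x (σ x) * σ).support.card + 1 = σ.support.card := by
      rw [Equiv.Perm.support_swap_mul_eq σ x hxx, Finset.sdiff_singleton_eq_erase,
        Finset.card_erase_add_one (Equiv.Perm.mem_support.mpr hx)]
    have hcycle := cycleCount_add_card_support_of_isCycle (h.swap_mul hx hxx)
    omega

theorem cycleCount_swap_mul {x : ι} (hx : σ x ≠ x) :
    cycleCount (Equiv.swap x (σ x) * σ) = cycleCount σ + 1 := by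
  set c := σ.cycleOf x
  set ρ := σ * c⁻¹
  have hcx : c x = σ x := σ.cycleOf_apply_self x
  have hdisj : c.Disjoint ρ :=
    (Equiv.Perm.disjoint_mul_inv_of_mem_cycleFactorsFinset
      (Equiv.Perm.cycleOf_mem_cycleFactorsFinset_iff.mpr (Equiv.Perm.mem_support.mpr hx))).symm
  have hσ : σ = c * ρ := by rw [hdisj.commute.eq, inv_mul_cancel_right]
  have hdisj' : (Equiv.swap x (c x) * c).Disjoint ρ :=
    Equiv.Perm.disjoint_iff_disjoint_support.mpr <|
      (Equiv.Perm.disjoint_iff_disjoint_support.mp hdisj).mono_left fun _ hy =>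
        (Equiv.Perm.mem_support_swap_mul_imp_mem_support_ne hy).1
  have hsplit : Equiv.swap x (σ x) * σ = Equiv.swap x (c x) * c * ρ := by
    rw [mul_assoc, ← hσ, hcx]
  have hc : cycleCount (Equiv.swap x (c x) * c) = cycleCount c + 1 :=
    cycleCount_swap_mul_of_isCycle (Equiv.Perm.isCycle_cycleOf σ hx) (hcx.trans_ne hx)
  have h₁ := cycleCount_mul_add_card_of_disjoint hdisj
  have h₂ := cycleCount_mul_add_card_of_disjoint hdisj'
  rw [← hσ] at h₁
  rw [← hsplit] at h₂
  omega

theorem cycleCount_decomposeFin_symm_zero {k : ℕ} (e : Equiv.Perm (Fin k)) :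
    cycleCount (Equiv.Perm.decomposeFin.symm (0, e)) = cycleCount e + 1 := by
  let succEquiv := Equiv.ofInjective (Fin.succ : Fin k → Fin (k + 1)) (Fin.succ_injective k)
  have hext : Equiv.Perm.decomposeFin.symm (0, e) = e.extendDomain succEquiv := by
    ext i
    cases i using Fin.cases with
    | zero =>
      rw [Equiv.Perm.decomposeFin_symm_apply_zero,
        Equiv.Perm.extendDomain_apply_not_subtype _ _ fun ⟨j, hj⟩ => Fin.succ_ne_zero j hj]
    | succ j =>
      have hj : e.extendDomain succEquiv j.succ = (e j).succ :=
        e.extendDomain_apply_image succEquiv j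
      rw [Equiv.Perm.decomposeFin_symm_apply_succ, Equiv.swap_self, Equiv.refl_apply, hj]
  have hle : e.support.card ≤ k := Finset.card_le_univ e.support |>.trans_eq (Fintype.card_fin k)
  simp only [cycleCount, hext, Equiv.Perm.cycleType_extendDomain,
    Equiv.Perm.card_support_extend_domain, Fintype.card_fin]
  omega

theorem cycleCount_decomposeFin_symm_succ {k : ℕ} (a : Fin k) (e : Equiv.Perm (Fin k)) :
    cycleCount (Equiv.Perm.decomposeFin.symm (a.succ, e)) = cycleCount e := by
  set π := Equiv.Perm.decomposeFin.symm (a.succ, e)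
  have hπ : π 0 = a.succ := Equiv.Perm.decomposeFin_symm_apply_zero a.succ e
  have hswap : Equiv.swap 0 (π 0) * π = Equiv.Perm.decomposeFin.symm (0, e) := by
    ext i
    cases i using Fin.cases <;> simp [π]
  have hcount := cycleCount_swap_mul (hπ.trans_ne a.succ_ne_zero)
  rw [hswap, cycleCount_decomposeFin_symm_zero] at hcount
  omega

end CycleCount

section Detr

variable {ι R : Type*} [Fintype ι] [DecidableEq ι] [CommRing R]

theorem detr_one_eq_det (M : Matrix ι ι R) : detr 1 M = M.det := by
  simp [detr, ← Matrix.det_transpose M, Matrix.det_apply']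

theorem map_detr {S : Type*} [CommRing S] (φ : R →+* S) (r : ℕ) (M : Matrix ι ι R) :
    φ (detr r M) = detr r (M.map φ) := by
  simp [detr]

theorem detr_updateRow (r : ℕ) (M : Matrix ι ι R) (i : ι) (v : ι → R) :
    detr r (M.updateRow i v) = ∑ σ : Equiv.Perm ι, ((Equiv.Perm.sign σ : ℤ) : R) *
      (r : R) ^ cycleCount σ * ((∏ j ∈ Finset.univ.erase i, M j (σ j)) * v (σ i)) := by
  refine Finset.sum_congr rfl fun σ _ => ?_
  rw [← Finset.prod_erase_mul _ _ (Finset.mem_univ i), Matrix.updateRow_self,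
    Finset.prod_congr rfl fun j hj => by rw [Matrix.updateRow_ne (Finset.ne_of_mem_erase hj)]]

theorem prod_decomposeFin_symm_succ {k : ℕ} (N : Matrix (Fin (k + 1)) (Fin (k + 1)) R)
    (e : Equiv.Perm (Fin k)) (j : Fin k) :
    ∏ i, N i (Equiv.Perm.decomposeFin.symm ((e j).succ, e) i) =
      (∏ l ∈ Finset.univ.erase j, N l.succ (e l).succ) * (N j.succ 0 * N 0 (e j).succ) := by
  have hne : ∀ l ∈ Finset.univ.erase j,
      N l.succ (Equiv.Perm.decomposeFin.symm ((e j).succ, e) l.succ) = N l.succ (e l).succ := by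
    intro l hl
    rw [Equiv.Perm.decomposeFin_symm_apply_succ, Equiv.swap_apply_of_ne_of_ne
      (Fin.succ_ne_zero _) ((Fin.succ_injective _).ne (e.injective.ne (Finset.ne_of_mem_erase hl)))]
  rw [Fin.prod_univ_succ, ← Finset.prod_erase_mul _ _ (Finset.mem_univ j),
    Finset.prod_congr rfl hne, Equiv.Perm.decomposeFin_symm_apply_zero,
    Equiv.Perm.decomposeFin_symm_apply_succ, Equiv.swap_apply_right]
  ring

-- Delete `0` from its cycle: permutations fixing `0` lose a cycle and give the first term, while
-- those with `j ↦ 0` keep the number of cycles, change sign, and give the `j`-th summand.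
theorem detr_succ (r : ℕ) {k : ℕ} (N : Matrix (Fin (k + 1)) (Fin (k + 1)) R) :
    detr r N = r * N 0 0 * detr r (N.submatrix Fin.succ Fin.succ) +
      ∑ j : Fin k, detr r ((N.submatrix Fin.succ Fin.succ).updateRow j
        fun t => -(N j.succ 0 * N 0 t.succ)) := by
  rw [detr, ← Equiv.sum_comp Equiv.Perm.decomposeFin.symm, Fintype.sum_prod_type,
    Fin.sum_univ_succ]
  congr 1
  · rw [detr, Finset.mul_sum]
    refine Finset.sum_congr rfl fun e _ => ?_
    simp only [cycleCount_decomposeFin_symm_zero, Equiv.Perm.decomposeFin.symm_sign, if_true,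
      one_mul, Fin.prod_univ_succ, Equiv.Perm.decomposeFin_symm_apply_zero,
      Equiv.Perm.decomposeFin_symm_apply_succ, Equiv.swap_self, Equiv.refl_apply,
      Matrix.submatrix_apply]
    ring
  · simp only [detr_updateRow]
    rw [Finset.sum_comm, Finset.sum_comm (s := Finset.univ (α := Fin k))]
    refine Finset.sum_congr rfl fun e _ => ?_
    rw [← Equiv.sum_comp e]
    refine Finset.sum_congr rfl fun j _ => ?_
    rw [cycleCount_decomposeFin_symm_succ, Equiv.Perm.decomposeFin.symm_sign,
      prod_decomposeFin_symm_succ, if_neg (Fin.succ_ne_zero _)]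
    push_cast
    simp only [Matrix.submatrix_apply]
    ring

end Detr

section Derivation

theorem derivation_prod {R A ι : Type*} [CommSemiring R] [CommSemiring A] [Algebra R A]
    [DecidableEq ι] (D : Derivation R A A) (s : Finset ι) (g : ι → A) :
    D (∏ i ∈ s, g i) = ∑ i ∈ s, (∏ j ∈ s.erase i, g j) * D (g i) := by
  induction s using Finset.induction_on with
  | empty => simp
  | insert a s ha ih =>
    have herase : ∀ i ∈ s, (∏ j ∈ (insert a s).erase i, g j) * D (g i) =
        g a * ((∏ j ∈ s.erase i, g j) * D (g i)) := by
      intro i hi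
      rw [Finset.erase_insert_of_ne (ne_of_mem_of_not_mem hi ha).symm,
        Finset.prod_insert (mt Finset.mem_of_mem_erase ha), mul_assoc]
    rw [Finset.prod_insert ha, Derivation.leibniz, ih, Finset.sum_insert ha,
      Finset.erase_insert ha, Finset.sum_congr rfl herase, smul_eq_mul, smul_eq_mul,
      Finset.mul_sum, add_comm]

theorem map_derivation_mul {R A l m n : Type*} [CommSemiring R] [CommSemiring A] [Algebra R A]
    [Fintype m] (D : Derivation R A A) (M : Matrix l m A) (N : Matrix m n A) :
    (M * N).map D = M * N.map D + M.map D * N := by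
  ext i j
  simp only [Matrix.map_apply, Matrix.mul_apply, Matrix.add_apply, map_sum, Derivation.leibniz,
    smul_eq_mul, Finset.sum_add_distrib, mul_comm (N _ _)]

variable {R S ι : Type*} [CommSemiring R] [CommRing S] [Algebra R S] [Fintype ι] [DecidableEq ι]
  (D : Derivation R S S)

theorem derivation_detr (r : ℕ) (M : Matrix ι ι S) :
    D (detr r M) = ∑ i, detr r (M.updateRow i fun j => D (M i j)) := by
  simp only [detr_updateRow]
  rw [detr, map_sum, Finset.sum_comm]
  refine Finset.sum_congr rfl fun σ _ => ?_
  have hcoeff : D (((Equiv.Perm.sign σ : ℤ) : S) * (r : S) ^ cycleCount σ) = 0 := by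
    rw [← Nat.cast_pow]
    rcases Int.units_eq_one_or (Equiv.Perm.sign σ) with h | h <;>
      simp [h, -Nat.cast_pow, D.map_natCast]
  rw [Derivation.leibniz, hcoeff, smul_zero, add_zero, smul_eq_mul, derivation_prod,
    Finset.mul_sum]

theorem derivation_det (M : Matrix ι ι S) : D M.det = (M.adjugate * M.map D).trace := by
  have hrow (i : ι) : (M.updateRow i fun j => D (M i j)).det =
      ∑ j, M.adjugate j i * D (M i j) := by
    rw [← Matrix.cramer_transpose_apply, Matrix.cramer_eq_adjugate_mulVec,
      ← Matrix.adjugate_transpose]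
    rfl
  calc D M.det = ∑ i, (M.updateRow i fun j => D (M i j)).det := by
        simp only [← detr_one_eq_det, derivation_detr]
    _ = ∑ i, ∑ j, M.adjugate j i * D (M i j) := Finset.sum_congr rfl fun i _ => hrow i
    _ = (M.adjugate * M.map D).trace := Finset.sum_comm

theorem map_derivation_inv {M : Matrix ι ι S} (hM : IsUnit M.det) :
    M⁻¹.map D = -(M⁻¹ * M.map D * M⁻¹) := by
  have hone : (1 : Matrix ι ι S).map D = 0 := by
    ext i j
    rw [Matrix.map_apply, Matrix.one_apply]
    split_ifs <;> simp
  have hmul : M⁻¹ * M.map D + M⁻¹.map D * M = 0 := by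
    rw [← map_derivation_mul, Matrix.nonsing_inv_mul _ hM, hone]
  calc M⁻¹.map D = M⁻¹.map D * M * M⁻¹ := (Matrix.mul_nonsing_inv_cancel_right _ _ hM).symm
    _ = -(M⁻¹ * M.map D * M⁻¹) := by rw [eq_neg_of_add_eq_zero_right hmul, neg_mul]

end Derivation

theorem map_nonsing_inv {ι R S : Type*} [Fintype ι] [DecidableEq ι] [CommRing R]
    [CommRing S] (φ : R →+* S) {M : Matrix ι ι R} (hM : IsUnit M.det) :
    M⁻¹.map φ = (M.map φ)⁻¹ := by
  refine (Matrix.inv_eq_left_inv ?_).symm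
  rw [← Matrix.map_mul, Matrix.nonsing_inv_mul _ hM, Matrix.map_one _ φ.map_zero φ.map_one]

section DiagonalDerivations

variable {R S ι : Type*} [CommSemiring R] [CommRing S] [Algebra R S] [Fintype ι] [DecidableEq ι]
  {D : Derivation R S S} {W : Matrix ι ι S} {i : ι}

theorem derivation_det_of_map_eq_single (hW : IsUnit W.det) (hD : W.map D = Matrix.single i i 1) :
    D W.det = W.det * W⁻¹ i i := by
  rw [derivation_det, hD, Matrix.trace_mul_single, Matrix.inv_def, Matrix.smul_apply,
    smul_eq_mul, Ring.mul_inverse_cancel_left _ _ hW]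
  simp

theorem derivation_inv_apply_of_map_eq_single (hW : IsUnit W.det)
    (hD : W.map D = Matrix.single i i 1) (a b : ι) : D (W⁻¹ a b) = -(W⁻¹ a i * W⁻¹ i b) := by
  have hmap : W⁻¹.map D = -Matrix.vecMulVec (W⁻¹.col i) (W⁻¹.row i) := by
    rw [map_derivation_inv D hW, hD, Matrix.single_eq_single_vecMulVec_single,
      Matrix.mul_vecMulVec, Matrix.vecMulVec_mul, Matrix.mulVec_single_one,
      Matrix.single_one_vecMul]
  exact congr_fun₂ hmap a b

theorem derivation_det_pow_mul_detr (hW : IsUnit W.det) (r : ℕ) {k : ℕ} (f : Fin (k + 1) → ι)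
    (hD : W.map D = Matrix.single (f 0) (f 0) 1) :
    D (W.det ^ r * detr r (W⁻¹.submatrix (f ∘ Fin.succ) (f ∘ Fin.succ))) =
      W.det ^ r * detr r (W⁻¹.submatrix f f) := by
  have hpow : D (W.det ^ r) = W.det ^ r * (r * W⁻¹ (f 0) (f 0)) := by
    rw [Derivation.leibniz_pow, derivation_det_of_map_eq_single hW hD]
    cases r with
    | zero => simp
    | succ r =>
      simp only [Nat.add_sub_cancel, smul_eq_mul, nsmul_eq_mul]
      ring
  rw [Derivation.leibniz, hpow, derivation_detr, detr_succ r (W⁻¹.submatrix f f)]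
  simp only [Matrix.submatrix_apply, Matrix.submatrix_submatrix, Function.comp_apply, smul_eq_mul,
    derivation_inv_apply_of_map_eq_single hW hD]
  ring

theorem prod_derivation_det_pow {D : ι → Derivation R S S} (hW : IsUnit W.det)
    (hD : ∀ i, W.map (D i) = Matrix.single i i 1) (r k : ℕ) (f : Fin k → ι) :
    (List.ofFn fun s => (D (f s) : S →ₗ[R] S)).prod (W.det ^ r) =
      W.det ^ r * detr r (W⁻¹.submatrix f f) := by
  induction k with
  | zero => simp [detr, cycleCount]
  | succ k ih =>
    simp only [List.ofFn_succ, List.prod_cons, Module.End.mul_apply, ih fun s => f s.succ]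
    exact derivation_det_pow_mul_detr hW r f (hD (f 0))

end DiagonalDerivations

section TaylorExpansion

variable {σ R : Type*} [CommSemiring R] (z : σ → R)

/-- The Taylor expansion of a polynomial at the point `z`, that is `p(z + X)`. It takes values in
power series, where a polynomial not vanishing at `z` becomes invertible. -/
noncomputable def taylorExpansion : MvPolynomial σ R →ₐ[R] MvPowerSeries σ R :=
  MvPolynomial.aeval fun i => MvPowerSeries.X i + MvPowerSeries.C (z i)

theorem taylorExpansion_C (a : R) :
    taylorExpansion z (MvPolynomial.C a) = MvPowerSeries.C a :=
  MvPolynomial.aeval_C _ a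

theorem taylorExpansion_X (i : σ) :
    taylorExpansion z (MvPolynomial.X i) = MvPowerSeries.X i + MvPowerSeries.C (z i) :=
  MvPolynomial.aeval_X _ i

theorem constantCoeff_taylorExpansion (p : MvPolynomial σ R) :
    MvPowerSeries.constantCoeff (taylorExpansion z p) = MvPolynomial.eval z p := by
  induction p using MvPolynomial.induction_on with
  | C a => rw [taylorExpansion_C, MvPowerSeries.constantCoeff_C, MvPolynomial.eval_C]
  | add p q hp hq => simp only [map_add, hp, hq]
  | mul_X p i hp => simp [taylorExpansion_X, hp]

theorem pderiv_taylorExpansion (i : σ) (p : MvPolynomial σ R) :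
    MvPowerSeries.pderiv R i (taylorExpansion z p) =
      taylorExpansion z (MvPolynomial.pderiv i p) := by
  classical
  induction p using MvPolynomial.induction_on with
  | C a => simp only [taylorExpansion_C, MvPowerSeries.pderiv_C, MvPolynomial.pderiv_C, map_zero]
  | add p q hp hq => simp only [map_add, hp, hq]
  | mul_X p j hp =>
    have hX : MvPowerSeries.pderiv R i (taylorExpansion z (MvPolynomial.X j)) =
        taylorExpansion z (MvPolynomial.pderiv i (MvPolynomial.X j)) := by
      rcases eq_or_ne j i with rfl | hji
      · simp [taylorExpansion_X]
      · simp [taylorExpansion_X, hji]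
    simp only [map_mul, Derivation.leibniz, smul_eq_mul, map_add, hp, hX]

theorem prod_pderiv_taylorExpansion {k : ℕ} (f : Fin k → σ) (p : MvPolynomial σ R) :
    (List.ofFn fun s => (MvPowerSeries.pderiv R (f s)).toLinearMap).prod (taylorExpansion z p) =
      taylorExpansion z
        ((List.ofFn fun s => (MvPolynomial.pderiv (f s)).toLinearMap).prod p) := by
  induction k with
  | zero => simp
  | succ k ih =>
    simp only [List.ofFn_succ, List.prod_cons, Module.End.mul_apply, ih fun s => f s.succ]
    exact pderiv_taylorExpansion z (f 0) _

end TaylorExpansion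

section DiagonalMatrix

variable {σ R : Type*} [DecidableEq σ] [CommRing R] (A : Matrix σ σ R)

theorem map_eval_diagonal_X_sub (z : σ → R) :
    (Matrix.diagonal MvPolynomial.X - A.map MvPolynomial.C).map (MvPolynomial.eval z) =
      Matrix.diagonal z - A := by
  ext i j
  simp [Matrix.diagonal_apply, apply_ite]

theorem map_pderiv_diagonal_X_sub (i : σ) :
    (Matrix.diagonal MvPolynomial.X - A.map MvPolynomial.C).map (MvPolynomial.pderiv i) =
      Matrix.single i i 1 := by
  ext1 a b
  rcases eq_or_ne a b with rfl | hab
  · simp [MvPolynomial.pderiv_X, Pi.single_apply, Matrix.single_apply, eq_comm]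
  · simp only [Matrix.map_apply, Matrix.sub_apply, Matrix.diagonal_apply_ne _ hab,
      map_sub, map_zero, MvPolynomial.pderiv_C, sub_zero]
    rw [Matrix.single_apply_of_ne]
    rintro ⟨rfl, rfl⟩
    exact hab rfl

theorem ZsubA_eq_diagonal_X_sub {n : ℕ} (A : Matrix (Fin n) (Fin n) ℂ) :
    ZsubA A = Matrix.diagonal MvPolynomial.X - A.map MvPolynomial.C := by
  ext1 i j
  simp [ZsubA, Matrix.diagonal_apply]

end DiagonalMatrix

theorem mixed_partial_eq_det2_general {σ R : Type*} [Fintype σ] [DecidableEq σ] [CommRing R]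
    (A : Matrix σ σ R) (z : σ → R) (hinv : IsUnit (Matrix.diagonal z - A).det) (r k : ℕ)
    (f : Fin k → σ) :
    MvPolynomial.eval z ((List.ofFn fun s => (MvPolynomial.pderiv (f s)).toLinearMap).prod
        ((Matrix.diagonal MvPolynomial.X - A.map MvPolynomial.C).det ^ r)) =
      MvPolynomial.eval z ((Matrix.diagonal MvPolynomial.X - A.map MvPolynomial.C).det ^ r) *
        detr r ((Matrix.diagonal z - A)⁻¹.submatrix f f) := by
  set W : Matrix σ σ (MvPolynomial σ R) := Matrix.diagonal MvPolynomial.X - A.map MvPolynomial.C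
  set T : Matrix σ σ (MvPowerSeries σ R) := W.map (taylorExpansion z)
  have hdet : taylorExpansion z (W.det ^ r) = T.det ^ r := by
    rw [map_pow, AlgHom.map_det]
    rfl
  have hT : T.map MvPowerSeries.constantCoeff = Matrix.diagonal z - A := by
    rw [← map_eval_diagonal_X_sub A z, Matrix.map_map]
    exact congrArg W.map (funext (constantCoeff_taylorExpansion z))
  have hunit : IsUnit T.det := by
    rw [MvPowerSeries.isUnit_iff_constantCoeff, RingHom.map_det, RingHom.mapMatrix_apply, hT]
    exact hinv
  have hderiv (i : σ) : T.map (MvPowerSeries.pderiv R i) = Matrix.single i i 1 := by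
    rw [Matrix.map_map]
    trans (W.map (MvPolynomial.pderiv i)).map (taylorExpansion z)
    · rw [Matrix.map_map]
      exact congrArg W.map (funext (pderiv_taylorExpansion z i))
    · rw [map_pderiv_diagonal_X_sub, Matrix.map_single, map_one]
  rw [← constantCoeff_taylorExpansion, ← prod_pderiv_taylorExpansion, hdet,
    prod_derivation_det_pow hunit hderiv, map_mul, ← hdet, constantCoeff_taylorExpansion, map_detr,
    ← Matrix.submatrix_map, map_nonsing_inv _ hunit, hT]

/-- For Hermitian `A`, `p = det(Z-A)²` and a real point `z` at which `Z - A` is invertible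
with inverse `B`: any mixed partial derivative `∂_{z_{f(1)}} ⋯ ∂_{z_{f(k)}} p` evaluated at
`z` equals `p(z) det₂(M)`, where `M_{s,t} = B_{f(s), f(t)}`. -/
theorem mixed_partial_eq_det2 {n : ℕ} (A : Matrix (Fin n) (Fin n) ℂ) (hA : A.IsHermitian)
    (z : Fin n → ℝ)
    (hinv : IsUnit (Matrix.diagonal (fun i => (z i : ℂ)) - A).det)
    (k : ℕ) (f : Fin k → Fin n) :
    MvPolynomial.eval (fun i => ((z i : ℝ) : ℂ))
        (((List.ofFn (fun s : Fin k => pd (f s))).prod) ((ZsubA A).det ^ 2))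
      = MvPolynomial.eval (fun i => ((z i : ℝ) : ℂ)) ((ZsubA A).det ^ 2) *
        detr 2 (Matrix.of fun s t : Fin k =>
          ((Matrix.diagonal (fun i => (z i : ℂ)) - A)⁻¹) (f s) (f t)) := by
  rw [ZsubA_eq_diagonal_X_sub]
  exact mixed_partial_eq_det2_general A _ hinv 2 k f
end
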